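/- arXiv:1403.5413 — 4 statements merged into one kernel-verified Lean document; each statement's English description precedes it below -/
import Mathlib

section
/- Let p ∈ (1;2) and α ∈ (p−1; 1). There exists a constant C > 0 depending only on p and α such that the following holds. Let a < b, y₀ ∈ ℝ, let x : [a;b] → ℝ be continuous with finite p-variation, and let F : ℝ → ℝ satisfy |F(u) − F(v)| ≤ K·|u − v|^α for all u, v ∈ ℝ, where K ≥ 0. Then there exists a function y : [a;b] → ℝ of finite p-variation with y(t) = y₀ + ∫_a^t F(y(s)) dx(s) (Riemann–Stieltjes integral) for all t ∈ [a;b], and moreover |y(a)| + ‖y‖_{p-var,[a;b]} ≤ R, where R > 0 is the least positive solution of the equation R = C·K·‖x‖_{p-var,[a;b]}·R^α + |y₀| + |F(0)|·‖x‖_{p-var,[a;b]}. -/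
open Filter Set

/-- Truncated variation of `f` on `[a;b]` with truncation parameter `δ`. -/
noncomputable def truncVar (f : ℝ → ℝ) (δ a b : ℝ) : ENNReal :=
  ⨆ (n : ℕ) (t : Fin (n + 1) → ℝ) (_ : StrictMono t)
    (_ : ∀ i, t i ∈ Set.Icc a b),
    ∑ i : Fin n, ENNReal.ofReal (|f (t i.succ) - f (t i.castSucc)| - δ)

/-- p-variation of `f` on `[a;b]`. -/
noncomputable def pVar (f : ℝ → ℝ) (p a b : ℝ) : ENNReal :=
  ⨆ (n : ℕ) (t : Fin (n + 1) → ℝ) (_ : StrictMono t)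
    (_ : ∀ i, t i ∈ Set.Icc a b),
    ∑ i : Fin n, ENNReal.ofReal (|f (t i.succ) - f (t i.castSucc)| ^ p)

/-- The p-variation norm `(V^p(f,[a;b]))^{1/p}`. -/
noncomputable def pVarNorm (f : ℝ → ℝ) (p a b : ℝ) : ℝ :=
  (pVar f p a b).toReal ^ (1 / p)

/-- Oscillation norm `sup_{a ≤ s < t ≤ b} |f t - f s|`. -/
noncomputable def oscNorm (f : ℝ → ℝ) (a b : ℝ) : ℝ :=
  sSup {x | ∃ s ∈ Set.Icc a b, ∃ t ∈ Set.Icc a b, s < t ∧ x = |f t - f s|}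

/-- Sup norm `sup_{a ≤ t ≤ b} |f t|`. -/
noncomputable def supNorm (f : ℝ → ℝ) (a b : ℝ) : ℝ :=
  sSup {x | ∃ t ∈ Set.Icc a b, x = |f t|}

/-- `I` is the Riemann–Stieltjes integral `∫_a^b f dg`. -/
def RSIntegral (f g : ℝ → ℝ) (a b : ℝ) (I : ℝ) : Prop :=
  ∀ ε > (0 : ℝ), ∃ δ > (0 : ℝ), ∀ (n : ℕ) (t : Fin (n + 1) → ℝ) (ξ : Fin n → ℝ),
    StrictMono t → t 0 = a → t (Fin.last n) = b →
    (∀ i : Fin n, t i.castSucc ≤ ξ i ∧ ξ i ≤ t i.succ) →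
    (∀ i : Fin n, t i.succ - t i.castSucc < δ) →
    |∑ i : Fin n, f (ξ i) * (g (t i.succ) - g (t i.castSucc)) - I| < ε

/-- `f` is regulated on `[a;b]`: all the relevant one-sided limits exist and are finite. -/
def Regulated (f : ℝ → ℝ) (a b : ℝ) : Prop :=
  (∃ L : ℝ, Tendsto f (nhdsWithin a (Set.Ioi a)) (nhds L)) ∧
  (∃ L : ℝ, Tendsto f (nhdsWithin b (Set.Iio b)) (nhds L)) ∧
  ∀ x ∈ Set.Ioo a b,
    (∃ L : ℝ, Tendsto f (nhdsWithin x (Set.Iio x)) (nhds L)) ∧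
    (∃ L : ℝ, Tendsto f (nhdsWithin x (Set.Ioi x)) (nhds L))

/-- `f` and `g` have no common points of discontinuity on `[a;b]`. -/
def NoCommonDiscont (f g : ℝ → ℝ) (a b : ℝ) : Prop :=
  ∀ x ∈ Set.Icc a b,
    ContinuousWithinAt f (Set.Icc a b) x ∨ ContinuousWithinAt g (Set.Icc a b) x

/-!
Euler's scheme with step `h` solves the equation with `F(y(s))` replaced by `F(y(σ s))`, where `σ s`
is the grid point before `s`. Every increment of the Euler path `y` is a finite Riemann–Stieltjes
sum, so the discrete sewing lemma gives Young's estimate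
`|y t - y s - F(y(σ t)) (x t - x s)| ≤ c K V_y(σ s, σ t)^(α/p) V_x(s, t)^(1/p)`, where `V_g` denotes
the `p`-variation of `g` and the exponents add up to more than one. The right-hand side involves `y`
only at grid points before `t`, so the equation for `R` bounds the `p`-variation of `y` by induction
over the grid, uniformly in `h`. A pointwise limit of the paths along an ultrafilter inherits this
bound. It solves the equation because, by Young's estimate again, Riemann–Stieltjes sums of small
mesh are close to the increments of the Euler paths uniformly in `h`.
-/

/-! ### Controls -/

/-- A control on `S` in the sense of rough path theory: a nonnegative superadditive function of
ordered pairs. Continuity is not part of the notion here, and off `S` the values are arbitrary. -/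
structure IsControlOn {ι : Type*} [Preorder ι] (ω : ι → ι → ℝ) (S : Set ι) : Prop where
  nonneg ⦃s t : ι⦄ : s ∈ S → t ∈ S → s ≤ t → 0 ≤ ω s t
  superadditive ⦃s u t : ι⦄ :
    s ∈ S → u ∈ S → t ∈ S → s ≤ u → u ≤ t → ω s u + ω u t ≤ ω s t

lemma rpow_mul_rpow_add_le {a b c d r q : ℝ} (ha : 0 ≤ a) (hb : 0 ≤ b) (hc : 0 ≤ c) (hd : 0 ≤ d)
    (hr : 0 < r) (hq : 0 < q) (hrq : r + q = 1) :
    a ^ r * b ^ q + c ^ r * d ^ q ≤ (a + c) ^ r * (b + d) ^ q := by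
  have hconj : (r⁻¹).HolderConjugate q⁻¹ :=
    Real.holderConjugate_iff.2 ⟨(one_lt_inv₀ hr).2 (by linarith), by simpa using hrq⟩
  have hcancel : ∀ {z e : ℝ}, 0 ≤ z → 0 < e → (z ^ e) ^ e⁻¹ = z := fun hz he =>
    Real.rpow_rpow_inv hz he.ne'
  simpa [Fin.sum_univ_two, hcancel, *] using
    Real.inner_le_Lp_mul_Lq_of_nonneg Finset.univ hconj
      (f := ![a ^ r, c ^ r]) (g := ![b ^ q, d ^ q])
      (by simp [Fin.forall_fin_two, Real.rpow_nonneg, *])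
      (by simp [Fin.forall_fin_two, Real.rpow_nonneg, *])

namespace IsControlOn

variable {ι κ : Type*} [Preorder ι] [Preorder κ] {ω ω₁ ω₂ : ι → ι → ℝ} {S : Set ι}

lemma subset (hω : IsControlOn ω S) {T : Set ι} (hTS : T ⊆ S) : IsControlOn ω T where
  nonneg _ _ hs ht := hω.nonneg (hTS hs) (hTS ht)
  superadditive _ _ _ hs hu ht := hω.superadditive (hTS hs) (hTS hu) (hTS ht)

lemma comp (hω : IsControlOn ω S) {τ : κ → ι} {T : Set κ} (hτ : MonotoneOn τ T)
    (hTS : MapsTo τ T S) : IsControlOn (fun s t => ω (τ s) (τ t)) T where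
  nonneg _ _ hs ht hst := hω.nonneg (hTS hs) (hTS ht) (hτ hs ht hst)
  superadditive _ _ _ hs hu ht hsu hut :=
    hω.superadditive (hTS hs) (hTS hu) (hTS ht) (hτ hs hu hsu) (hτ hu ht hut)

lemma mono (hω : IsControlOn ω S) {s u v t : ι} (hs : s ∈ S) (hu : u ∈ S) (hv : v ∈ S) (ht : t ∈ S)
    (hsu : s ≤ u) (huv : u ≤ v) (hvt : v ≤ t) : ω u v ≤ ω s t := by
  have h₁ := hω.superadditive hs hu ht hsu (huv.trans hvt)
  have h₂ := hω.superadditive hu hv ht huv hvt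
  linarith [hω.nonneg hs hu hsu, hω.nonneg hv ht hvt]

lemma self_eq_zero (hω : IsControlOn ω S) {s : ι} (hs : s ∈ S) : ω s s = 0 := by
  linarith [hω.superadditive hs hs hs le_rfl le_rfl, hω.nonneg hs hs le_rfl]

lemma const_mul (hω : IsControlOn ω S) {c : ℝ} (hc : 0 ≤ c) :
    IsControlOn (fun s t => c * ω s t) S where
  nonneg _ _ hs ht hst := mul_nonneg hc (hω.nonneg hs ht hst)
  superadditive s u t hs hu ht hsu hut := by
    rw [← mul_add]
    exact mul_le_mul_of_nonneg_left (hω.superadditive hs hu ht hsu hut) hc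

lemma rpow (hω : IsControlOn ω S) {θ : ℝ} (hθ : 1 ≤ θ) :
    IsControlOn (fun s t => ω s t ^ θ) S where
  nonneg _ _ hs ht hst := Real.rpow_nonneg (hω.nonneg hs ht hst) θ
  superadditive s u t hs hu ht hsu hut := by
    have h₁ := hω.nonneg hs hu hsu
    have h₂ := hω.nonneg hu ht hut
    calc ω s u ^ θ + ω u t ^ θ ≤ (ω s u + ω u t) ^ θ := Real.add_rpow_le_rpow_add h₁ h₂ hθ
      _ ≤ ω s t ^ θ := by
        gcongr
        exact hω.superadditive hs hu ht hsu hut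

lemma rpow_mul_rpow (hω₁ : IsControlOn ω₁ S) (hω₂ : IsControlOn ω₂ S) {r q : ℝ} (hr : 0 < r)
    (hq : 0 < q) (hrq : r + q = 1) : IsControlOn (fun s t => ω₁ s t ^ r * ω₂ s t ^ q) S where
  nonneg _ _ hs ht hst := mul_nonneg (Real.rpow_nonneg (hω₁.nonneg hs ht hst) r)
    (Real.rpow_nonneg (hω₂.nonneg hs ht hst) q)
  superadditive s u t hs hu ht hsu hut := by
    have h₁ := hω₁.nonneg hs hu hsu
    have h₁' := hω₁.nonneg hu ht hut
    have h₂ := hω₂.nonneg hs hu hsu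
    have h₂' := hω₂.nonneg hu ht hut
    have h₁'' := hω₁.nonneg hs ht (hsu.trans hut)
    refine (rpow_mul_rpow_add_le h₁ h₂ h₁' h₂' hr hq hrq).trans ?_
    gcongr
    · exact hω₁.superadditive hs hu ht hsu hut
    · exact hω₂.superadditive hs hu ht hsu hut

lemma exists_rpow_eq_rpow_mul_rpow (hω₁ : IsControlOn ω₁ S) (hω₂ : IsControlOn ω₂ S) {β γ : ℝ}
    (hβ : 0 < β) (hγ : 0 < γ) :
    ∃ ω : ι → ι → ℝ, IsControlOn ω S ∧
      ∀ s ∈ S, ∀ t ∈ S, s ≤ t → ω s t ^ (β + γ) = ω₁ s t ^ β * ω₂ s t ^ γ := by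
  have hβγ : β + γ ≠ 0 := by positivity
  refine ⟨fun s t => ω₁ s t ^ (β / (β + γ)) * ω₂ s t ^ (γ / (β + γ)),
    hω₁.rpow_mul_rpow hω₂ (by positivity) (by positivity) (by field_simp),
    fun s hs t ht hst => ?_⟩
  have h₁ := hω₁.nonneg hs ht hst
  have h₂ := hω₂.nonneg hs ht hst
  rw [Real.mul_rpow (by positivity) (by positivity), ← Real.rpow_mul h₁, ← Real.rpow_mul h₂,
    div_mul_cancel₀ _ hβγ, div_mul_cancel₀ _ hβγ]

lemma sum_le (hω : IsControlOn ω S) {n : ℕ} {t : Fin (n + 1) → ι} (ht : Monotone t)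
    (htS : ∀ i, t i ∈ S) : ∑ i : Fin n, ω (t i.castSucc) (t i.succ) ≤ ω (t 0) (t (Fin.last n)) := by
  induction n with
  | zero => simpa using hω.nonneg (htS 0) (htS 0) le_rfl
  | succ n ih =>
    rw [Fin.sum_univ_castSucc]
    calc _ ≤ ω (t 0) (t (Fin.last n).castSucc) +
          ω (t (Fin.last n).castSucc) (t (Fin.last n).succ) := add_le_add_left (by
            simpa only [Fin.succ_castSucc, Function.comp_apply, Fin.castSucc_zero] using
              ih (ht.comp Fin.strictMono_castSucc.monotone) fun i => htS _) _
      _ ≤ ω (t 0) (t (Fin.last (n + 1))) := hω.superadditive (htS _) (htS _) (htS _)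
          (ht (Fin.zero_le _)) (ht (Fin.castSucc_le_succ _))

end IsControlOn

/-! ### Discrete sewing -/

/-- The constant of the discrete sewing lemma, the solution of `C = 2 ^ (1 - θ) * C + 2`. -/
noncomputable def sewingConst (θ : ℝ) : ℝ := 2 / (1 - 2 ^ (1 - θ))

lemma one_sub_two_rpow_pos {θ : ℝ} (hθ : 1 < θ) : 0 < 1 - (2 : ℝ) ^ (1 - θ) :=
  sub_pos.2 (Real.rpow_lt_one_of_one_lt_of_neg one_lt_two (by linarith))

lemma sewingConst_pos {θ : ℝ} (hθ : 1 < θ) : 0 < sewingConst θ :=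
  div_pos two_pos (one_sub_two_rpow_pos hθ)

lemma sewingConst_eq {θ : ℝ} (hθ : 1 < θ) :
    sewingConst θ = 2 * (sewingConst θ * (1 / 2) ^ θ) + 2 := by
  have hpow : (2 : ℝ) ^ (1 - θ) = 2 * (1 / 2) ^ θ := by
    rw [Real.rpow_sub two_pos, Real.rpow_one, Real.div_rpow one_pos.le two_pos.le, Real.one_rpow]
    ring
  have hne := (one_sub_two_rpow_pos hθ).ne'
  have : sewingConst θ * (1 - 2 ^ (1 - θ)) = 2 := div_mul_cancel₀ _ hne
  rw [hpow] at this
  linarith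

lemma IsControlOn.exists_bisection {ω : ℕ → ℕ → ℝ} (hω : IsControlOn ω univ) {i j : ℕ}
    (hij : i < j) :
    ∃ m, i ≤ m ∧ m < j ∧ ω i m ≤ ω i j / 2 ∧ ω (m + 1) j ≤ ω i j / 2 := by
  have hpos : 0 ≤ ω i j := hω.nonneg (mem_univ _) (mem_univ _) hij.le
  have hi : ω i i ≤ ω i j / 2 := by
    rw [hω.self_eq_zero (mem_univ i)]
    positivity
  let P : Set ℕ := {k | i ≤ k ∧ k < j ∧ ω i k ≤ ω i j / 2}
  have hP : BddAbove P := ⟨j, fun k hk => hk.2.1.le⟩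
  obtain ⟨him, hmj, hm⟩ : sSup P ∈ P := Nat.sSup_mem ⟨i, le_rfl, hij, hi⟩ hP
  refine ⟨sSup P, him, hmj, hm, ?_⟩
  rcases (show sSup P + 1 ≤ j from hmj).eq_or_lt with hmj' | hmj'
  · rw [hmj', hω.self_eq_zero (mem_univ j)]
    positivity
  · have hsucc : ω i j / 2 < ω i (sSup P + 1) := by
      by_contra! h
      exact (Nat.lt_succ_self _).not_ge (le_csSup hP ⟨by lia, hmj', h⟩)
    have := hω.superadditive (mem_univ i) (mem_univ (sSup P + 1)) (mem_univ j) (by lia) hmj'.le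
    linarith

theorem norm_le_sewingConst_mul_rpow {E : Type*} [SeminormedAddCommGroup E] {θ D : ℝ} (hθ : 1 < θ)
    (hD : 0 ≤ D) {J : ℕ → ℕ → E} {ω : ℕ → ℕ → ℝ} (hω : IsControlOn ω univ)
    (hJ_self : ∀ i, J i i = 0) (hJ_succ : ∀ i, J i (i + 1) = 0)
    (hJ : ∀ i j k, i ≤ j → j ≤ k → ‖J i k - J i j - J j k‖ ≤ D * ω i k ^ θ) {i j : ℕ}
    (hij : i ≤ j) : ‖J i j‖ ≤ sewingConst θ * D * ω i j ^ θ := by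
  have hC := sewingConst_pos hθ
  induction hn : j - i using Nat.strong_induction_on generalizing i j with
  | _ n ih =>
  subst hn
  have hpos : ∀ {k l}, k ≤ l → 0 ≤ ω k l := fun hkl => hω.nonneg (mem_univ _) (mem_univ _) hkl
  rcases hij.eq_or_lt with rfl | hij
  · rw [hJ_self, norm_zero]
    have := hpos (le_refl i)
    positivity
  obtain ⟨m, him, hmj, hleft, hright⟩ := hω.exists_bisection hij
  have hω_ij := hpos hij.le
  have hhalf : ∀ {z}, 0 ≤ z → z ≤ ω i j / 2 →
      sewingConst θ * D * z ^ θ ≤ sewingConst θ * D * (ω i j ^ θ * (1 / 2) ^ θ) := by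
    intro z hz hz'
    rw [← Real.mul_rpow hω_ij (by norm_num), mul_one_div]
    gcongr
  have hJ_left := (ih (m - i) (by lia) him rfl).trans (hhalf (hpos him) hleft)
  have hJ_right := (ih (j - (m + 1)) (by lia) hmj rfl).trans (hhalf (hpos hmj) hright)
  have hδ_left := hJ i m j him hmj.le
  have hδ_right : ‖J m j - J m (m + 1) - J (m + 1) j‖ ≤ D * ω i j ^ θ := by
    refine (hJ m (m + 1) j (by lia) hmj).trans ?_
    have := hpos hmj.le
    gcongr
    exact hω.mono (mem_univ _) (mem_univ _) (mem_univ _) (mem_univ _) him hmj.le le_rfl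
  calc ‖J i j‖ = ‖J i m + J (m + 1) j + (J i j - J i m - J m j)
        + (J m j - J m (m + 1) - J (m + 1) j)‖ := by
        rw [hJ_succ]
        congr 1
        abel
    _ ≤ ‖J i m‖ + ‖J (m + 1) j‖ + ‖J i j - J i m - J m j‖
        + ‖J m j - J m (m + 1) - J (m + 1) j‖ := norm_add₄_le
    _ ≤ (2 * (sewingConst θ * (1 / 2) ^ θ) + 2) * D * ω i j ^ θ := by linarith
    _ = sewingConst θ * D * ω i j ^ θ := by rw [← sewingConst_eq hθ]

/-! ### Young's estimate for step integrals -/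

/-- Hölder regularity measured by a control: `|f v - f u| ≤ M * ω u v ^ β` for `u ≤ v` in `S`. -/
def ControlledOn (f : ℝ → ℝ) (ω : ℝ → ℝ → ℝ) (M β : ℝ) (S : Set ℝ) : Prop :=
  ∀ u ∈ S, ∀ v ∈ S, u ≤ v → |f v - f u| ≤ M * ω u v ^ β

lemma ControlledOn.subset {f : ℝ → ℝ} {ω : ℝ → ℝ → ℝ} {M β : ℝ} {S T : Set ℝ}
    (hf : ControlledOn f ω M β S) (hTS : T ⊆ S) : ControlledOn f ω M β T :=
  fun u hu v hv => hf u (hTS hu) v (hTS hv)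

/-- The increment of `y` over `[s, t]` is a finite Riemann–Stieltjes sum of `f` against `x` with
tags at the right ends of the cells, and so is its increment over each cell. The points
`τ 0 ≤ τ 1 ≤ ...` of the partition may repeat, and reach `t` at some finite index. -/
def IsStepIntegral (y f x : ℝ → ℝ) (s t : ℝ) : Prop :=
  ∃ (τ : ℕ → ℝ) (N : ℕ), Monotone τ ∧ τ 0 = s ∧ τ N = t ∧ (∀ k, τ k ∈ Icc s t) ∧
    ∀ k, y (τ (k + 1)) - y (τ k) = f (τ (k + 1)) * (x (τ (k + 1)) - x (τ k))

section Young

variable {y f x : ℝ → ℝ} {ω₁ ω₂ : ℝ → ℝ → ℝ} {M N β γ s t : ℝ}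

lemma ControlledOn.abs_sub_mul_abs_sub_le {S : Set ℝ} (hf : ControlledOn f ω₁ M β S)
    (hx : ControlledOn x ω₂ N γ S) (hω₁ : IsControlOn ω₁ S) (hω₂ : IsControlOn ω₂ S)
    (hM : 0 ≤ M) (hN : 0 ≤ N) (hβ : 0 ≤ β) (hγ : 0 ≤ γ) {u v u' v' : ℝ} (hs : s ∈ S) (ht : t ∈ S)
    (hu : u ∈ S) (hv : v ∈ S) (hu' : u' ∈ S) (hv' : v' ∈ S) (huv : u ≤ v) (huv' : u' ≤ v')
    (hsu : s ≤ u) (hsu' : s ≤ u') (hvt : v ≤ t) (hvt' : v' ≤ t) :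
    |f v - f u| * |x v' - x u'| ≤ M * N * (ω₁ s t ^ β * ω₂ s t ^ γ) := by
  have h₁ := hω₁.nonneg hu hv huv
  have h₂ := hω₂.nonneg hu' hv' huv'
  have h₁' := hω₁.nonneg hs ht (hsu.trans (huv.trans hvt))
  have hf_le : |f v - f u| ≤ M * ω₁ s t ^ β := by
    refine (hf u hu v hv huv).trans ?_
    gcongr
    exact hω₁.mono hs hu hv ht hsu huv hvt
  have hx_le : |x v' - x u'| ≤ N * ω₂ s t ^ γ := by
    refine (hx u' hu' v' hv' huv').trans ?_
    gcongr
    exact hω₂.mono hs hu' hv' ht hsu' huv' hvt'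
  calc |f v - f u| * |x v' - x u'| ≤ (M * ω₁ s t ^ β) * (N * ω₂ s t ^ γ) := by gcongr
    _ = M * N * (ω₁ s t ^ β * ω₂ s t ^ γ) := by ring

theorem IsStepIntegral.abs_sub_sub_right_le (hy : IsStepIntegral y f x s t)
    (hf : ControlledOn f ω₁ M β (Icc s t)) (hx : ControlledOn x ω₂ N γ (Icc s t))
    (hω₁ : IsControlOn ω₁ (Icc s t)) (hω₂ : IsControlOn ω₂ (Icc s t)) (hM : 0 ≤ M) (hN : 0 ≤ N)
    (hβ : 0 < β) (hγ : 0 < γ) (hβγ : 1 < β + γ) :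
    |y t - y s - f t * (x t - x s)| ≤
      sewingConst (β + γ) * (M * N) * (ω₁ s t ^ β * ω₂ s t ^ γ) := by
  obtain ⟨τ, n, hτ, rfl, rfl, hτ_mem, hy⟩ := hy
  obtain ⟨ω, hω, hω_rpow⟩ := hω₁.exists_rpow_eq_rpow_mul_rpow hω₂ hβ hγ
  have hn := hτ n.zero_le
  rw [← hω_rpow _ (hτ_mem 0) _ (hτ_mem n) hn, ← Real.norm_eq_abs]
  refine norm_le_sewingConst_mul_rpow
    (J := fun i j => y (τ j) - y (τ i) - f (τ j) * (x (τ j) - x (τ i)))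
    hβγ (mul_nonneg hM hN) (hω.comp (hτ.monotoneOn univ) fun i _ => hτ_mem i)
    (fun i => by ring) (fun i => by rw [hy, sub_self]) (fun i j k hij hjk => ?_) n.zero_le
  rw [hω_rpow _ (hτ_mem i) _ (hτ_mem k) (hτ (hij.trans hjk))]
  calc _ = |f (τ k) - f (τ j)| * |x (τ j) - x (τ i)| := by
        rw [Real.norm_eq_abs, ← abs_mul, ← abs_neg]
        congr 1
        ring
    _ ≤ M * N * (ω₁ (τ i) (τ k) ^ β * ω₂ (τ i) (τ k) ^ γ) :=
        hf.abs_sub_mul_abs_sub_le hx hω₁ hω₂ hM hN hβ.le hγ.le (hτ_mem i) (hτ_mem k) (hτ_mem j)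
          (hτ_mem k) (hτ_mem i) (hτ_mem j) (hτ hjk) (hτ hij) (hτ hij) le_rfl le_rfl (hτ hjk)

theorem IsStepIntegral.abs_sub_sub_le (hy : IsStepIntegral y f x s t)
    (hf : ControlledOn f ω₁ M β (Icc s t)) (hx : ControlledOn x ω₂ N γ (Icc s t))
    (hω₁ : IsControlOn ω₁ (Icc s t)) (hω₂ : IsControlOn ω₂ (Icc s t)) (hM : 0 ≤ M) (hN : 0 ≤ N)
    (hβ : 0 < β) (hγ : 0 < γ) (hβγ : 1 < β + γ) {ξ : ℝ} (hξ : ξ ∈ Icc s t) :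
    |y t - y s - f ξ * (x t - x s)| ≤
      (sewingConst (β + γ) + 1) * (M * N) * (ω₁ s t ^ β * ω₂ s t ^ γ) := by
  have hst := hξ.1.trans hξ.2
  have hs := left_mem_Icc.2 hst
  have ht := right_mem_Icc.2 hst
  have htag := hf.abs_sub_mul_abs_sub_le hx hω₁ hω₂ hM hN hβ.le hγ.le hs ht hξ ht hs ht hξ.2 hst
    hξ.1 le_rfl le_rfl le_rfl
  calc |y t - y s - f ξ * (x t - x s)|
      = |(y t - y s - f t * (x t - x s)) + (f t - f ξ) * (x t - x s)| := by
        congr 1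
        ring
    _ ≤ |y t - y s - f t * (x t - x s)| + |f t - f ξ| * |x t - x s| := by
        rw [← abs_mul]
        exact abs_add_le _ _
    _ ≤ _ := add_le_add (hy.abs_sub_sub_right_le hf hx hω₁ hω₂ hM hN hβ hγ hβγ) htag
    _ = _ := by ring

end Young

/-! ### Superadditivity of the `p`-variation -/

/-- The sum over the partition `t` whose supremum over all partitions is `pVar g p a b`. -/
noncomputable def pVarSum (g : ℝ → ℝ) (p : ℝ) {n : ℕ} (t : Fin (n + 1) → ℝ) : ENNReal :=
  ∑ i : Fin n, ENNReal.ofReal (|g (t i.succ) - g (t i.castSucc)| ^ p)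

section PVar

variable {g : ℝ → ℝ} {p a b : ℝ}

lemma pVar_le_iff {B : ENNReal} : pVar g p a b ≤ B ↔
    ∀ (n : ℕ) (t : Fin (n + 1) → ℝ), StrictMono t → (∀ i, t i ∈ Icc a b) → pVarSum g p t ≤ B := by
  simp only [pVar, iSup_le_iff, pVarSum]

lemma pVarSum_le_pVar {n : ℕ} {t : Fin (n + 1) → ℝ} (ht : StrictMono t)
    (htI : ∀ i, t i ∈ Icc a b) : pVarSum g p t ≤ pVar g p a b :=
  pVar_le_iff.1 le_rfl n t ht htI

lemma pVar_mono {c d : ℝ} (hac : a ≤ c) (hdb : d ≤ b) : pVar g p c d ≤ pVar g p a b :=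
  pVar_le_iff.2 fun _ _ ht htI => pVarSum_le_pVar ht fun i => Icc_subset_Icc hac hdb (htI i)

lemma pVarNorm_mono (hp : 0 < p) (hg : pVar g p a b < ⊤) {c d : ℝ} (hac : a ≤ c) (hdb : d ≤ b) :
    pVarNorm g p c d ≤ pVarNorm g p a b :=
  Real.rpow_le_rpow ENNReal.toReal_nonneg (ENNReal.toReal_mono hg.ne (pVar_mono hac hdb))
    (one_div_nonneg.2 hp.le)

lemma pVarSum_vecCons (u : ℝ) {n : ℕ} (t : Fin (n + 1) → ℝ) :
    pVarSum g p (Matrix.vecCons u t) =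
      ENNReal.ofReal (|g (t 0) - g u| ^ p) + pVarSum g p t := by
  simp [pVarSum, Fin.sum_univ_succ]

lemma add_pVar_le (hab : a ≤ b) {c B : ENNReal}
    (h : ∀ (n : ℕ) (t : Fin (n + 1) → ℝ), StrictMono t → (∀ i, t i ∈ Icc a b) →
      c + pVarSum g p t ≤ B) : c + pVar g p a b ≤ B := by
  have hcB : c ≤ B := le_self_add.trans
    (h 0 (fun _ => a) (Subsingleton.strictMono (α := Fin 1) _) fun _ => left_mem_Icc.2 hab)
  rcases eq_or_ne c ⊤ with rfl | hc
  · simp [top_le_iff.1 hcB]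
  · exact add_le_of_le_tsub_left_of_le hcB
      (pVar_le_iff.2 fun n t ht htI => ENNReal.le_sub_of_add_le_left hc (h n t ht htI))

lemma ofReal_add_pVarSum_le_pVar {u v w : ℝ} (huv : u < v) (hvw : v ≤ w) {n : ℕ}
    {t : Fin (n + 1) → ℝ} (ht : StrictMono t) (htI : ∀ i, t i ∈ Icc v w) (ht0 : t 0 = v) :
    ENNReal.ofReal (|g v - g u| ^ p) + pVarSum g p t ≤ pVar g p u w := by
  rw [← ht0, ← pVarSum_vecCons]
  refine pVarSum_le_pVar (ht.vecCons (ht0.symm ▸ huv)) (Fin.forall_fin_succ.2 ⟨?_, fun i => ?_⟩)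
  · exact ⟨le_rfl, huv.le.trans hvw⟩
  · exact Icc_subset_Icc huv.le le_rfl (htI i)

lemma ofReal_add_pVar_le_pVar (hp : 0 < p) {u v w : ℝ} (huv : u ≤ v) (hvw : v ≤ w) :
    ENNReal.ofReal (|g v - g u| ^ p) + pVar g p v w ≤ pVar g p u w := by
  rcases huv.eq_or_lt with rfl | huv
  · simp [Real.zero_rpow hp.ne']
  refine add_pVar_le hvw fun n t ht htI => ?_
  rcases (htI 0).1.eq_or_lt with ht0 | ht0
  · exact ofReal_add_pVarSum_le_pVar huv hvw ht htI ht0.symm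
  · calc _ ≤ ENNReal.ofReal (|g v - g u| ^ p) + pVarSum g p (Matrix.vecCons v t) := by
          rw [pVarSum_vecCons]
          gcongr
          exact le_add_self
      _ ≤ pVar g p u w := ofReal_add_pVarSum_le_pVar huv hvw (ht.vecCons ht0)
          (Fin.forall_fin_succ.2 ⟨left_mem_Icc.2 hvw, htI⟩) rfl

lemma pVarSum_add_pVar_le_pVar (hp : 0 < p) {s u w : ℝ} (huw : u ≤ w) {n : ℕ}
    {t : Fin (n + 1) → ℝ} (ht : StrictMono t) (htI : ∀ i, t i ∈ Icc s u) :
    pVarSum g p t + pVar g p u w ≤ pVar g p (t 0) w := by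
  induction n with
  | zero => simpa [pVarSum] using pVar_mono (htI 0).2 le_rfl
  | succ n ih =>
    obtain ⟨v, t, rfl⟩ : ∃ v t', t = Matrix.vecCons v t' :=
      ⟨t 0, Fin.tail t, (Fin.cons_self_tail t).symm⟩
    obtain ⟨hv, ht⟩ := strictMono_vecCons.1 ht
    rw [pVarSum_vecCons, add_assoc, Matrix.cons_val_zero]
    calc _ ≤ ENNReal.ofReal (|g (t 0) - g v| ^ p) + pVar g p (t 0) w := by
          gcongr
          exact ih ht fun i => htI i.succ
      _ ≤ pVar g p v w := ofReal_add_pVar_le_pVar hp hv.le ((htI (Fin.succ 0)).2.trans huw)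

theorem pVar_add_pVar_le_pVar (hp : 0 < p) {s u w : ℝ} (hsu : s ≤ u) (huw : u ≤ w) :
    pVar g p s u + pVar g p u w ≤ pVar g p s w := by
  rw [add_comm]
  refine add_pVar_le hsu fun n t ht htI => ?_
  rw [add_comm]
  exact (pVarSum_add_pVar_le_pVar hp huw ht htI).trans (pVar_mono (htI 0).1 le_rfl)

/-- The real-valued control `(s, t) ↦ V^p(g, [s; t])`; it is `0` where the variation is infinite. -/
noncomputable def pVarControl (g : ℝ → ℝ) (p s t : ℝ) : ℝ := (pVar g p s t).toReal

lemma pVarControl_nonneg {s t : ℝ} : 0 ≤ pVarControl g p s t := ENNReal.toReal_nonneg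

lemma isControlOn_pVarControl (hp : 0 < p) (hg : pVar g p a b < ⊤) :
    IsControlOn (pVarControl g p) (Icc a b) where
  nonneg _ _ _ _ _ := pVarControl_nonneg
  superadditive s u t hs _ ht hsu hut := by
    have hst : pVar g p s t ≠ ⊤ := ((pVar_mono hs.1 ht.2).trans_lt hg).ne
    rw [pVarControl, pVarControl, ← ENNReal.toReal_add
      (ne_top_of_le_ne_top hst (pVar_mono le_rfl hut))
      (ne_top_of_le_ne_top hst (pVar_mono hsu le_rfl))]
    exact ENNReal.toReal_mono hst (pVar_add_pVar_le_pVar hp hsu hut)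

lemma controlledOn_pVarControl (hp : 0 < p) (hg : pVar g p a b < ⊤) :
    ControlledOn g (pVarControl g p) 1 (1 / p) (Icc a b) := by
  intro u hu v hv huv
  have huv_top : pVar g p u v ≠ ⊤ := ((pVar_mono hu.1 hv.2).trans_lt hg).ne
  have hle : |g v - g u| ^ p ≤ pVarControl g p u v := (ENNReal.ofReal_le_iff_le_toReal huv_top).1
    (le_self_add.trans (ofReal_add_pVar_le_pVar hp huv le_rfl))
  rw [one_mul, one_div]
  exact (Real.le_rpow_inv_iff_of_pos (abs_nonneg _) pVarControl_nonneg hp).2 hle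

lemma pVar_le_ofReal_of_control {ω : ℝ → ℝ → ℝ} (hab : a ≤ b) (hω : IsControlOn ω (Icc a b))
    (hg : ∀ s ∈ Icc a b, ∀ t ∈ Icc a b, s ≤ t → |g t - g s| ^ p ≤ ω s t) :
    pVar g p a b ≤ ENNReal.ofReal (ω a b) := by
  refine pVar_le_iff.2 fun n t ht htI => ?_
  rw [pVarSum, ← ENNReal.ofReal_sum_of_nonneg fun i _ => Real.rpow_nonneg (abs_nonneg _) p]
  refine ENNReal.ofReal_le_ofReal ?_
  calc _ ≤ ∑ i : Fin n, ω (t i.castSucc) (t i.succ) := Finset.sum_le_sum fun i _ =>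
        hg _ (htI _) _ (htI _) (ht.monotone (Fin.castSucc_le_succ i))
    _ ≤ ω (t 0) (t (Fin.last n)) := hω.sum_le ht.monotone htI
    _ ≤ ω a b := hω.mono (left_mem_Icc.2 hab) (htI _) (htI _) (right_mem_Icc.2 hab) (htI _).1
        (ht.monotone (Fin.zero_le _)) (htI _).2

lemma pVar_self (hp : p ≠ 0) : pVar g p a a = 0 := by
  refine nonpos_iff_eq_zero.1 (pVar_le_iff.2 fun n t _ htI => ?_)
  have ht (i : Fin (n + 1)) : t i = a := by simpa using htI i
  simp [pVarSum, ht, Real.zero_rpow hp]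

lemma pVar_le_ofReal_rpow_of_le_mul_pVarNorm {x : ℝ → ℝ} {M : ℝ} (hp : 0 < p) (hab : a ≤ b)
    (hx : pVar x p a b < ⊤) (hM : 0 ≤ M)
    (hg : ∀ s ∈ Icc a b, ∀ t ∈ Icc a b, s ≤ t → |g t - g s| ≤ M * pVarNorm x p s t) :
    pVar g p a b ≤ ENNReal.ofReal ((M * pVarNorm x p a b) ^ p) := by
  have hrpow : ∀ s t, (M * pVarNorm x p s t) ^ p = M ^ p * pVarControl x p s t := fun s t => by
    have h : 0 ≤ (pVar x p s t).toReal := ENNReal.toReal_nonneg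
    rw [pVarNorm, Real.mul_rpow hM (by positivity), one_div, Real.rpow_inv_rpow h hp.ne',
      pVarControl]
  rw [hrpow]
  refine pVar_le_ofReal_of_control (ω := fun s t => M ^ p * pVarControl x p s t) hab
    ((isControlOn_pVarControl hp hx).const_mul (Real.rpow_nonneg hM p)) fun s hs t ht hst => ?_
  rw [← hrpow]
  exact Real.rpow_le_rpow (abs_nonneg _) (hg s hs t ht hst) hp.le

lemma pVarControl_le_of_pVar_le {r s t : ℝ} (hr : 0 ≤ r) (hs : a ≤ s) (ht : t ≤ b)
    (hg : pVar g p a b ≤ ENNReal.ofReal (r ^ p)) : pVarControl g p s t ≤ r ^ p :=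
  ENNReal.toReal_le_of_le_ofReal (Real.rpow_nonneg hr p) ((pVar_mono hs ht).trans hg)

lemma pVarNorm_le_of_pVar_le {r : ℝ} (hp : 0 < p) (hr : 0 ≤ r)
    (hg : pVar g p a b ≤ ENNReal.ofReal (r ^ p)) : pVarNorm g p a b ≤ r := by
  rw [pVarNorm, one_div, Real.rpow_inv_le_iff_of_pos ENNReal.toReal_nonneg hr hp]
  exact pVarControl_le_of_pVar_le hr le_rfl le_rfl hg

lemma abs_sub_le_of_pVar_le {r s t : ℝ} (hp : 0 < p) (hr : 0 ≤ r) (hs : s ∈ Icc a b)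
    (ht : t ∈ Icc a b) (hst : s ≤ t) (hg : pVar g p a b ≤ ENNReal.ofReal (r ^ p)) :
    |g t - g s| ≤ r := by
  have h := controlledOn_pVarControl hp (hg.trans_lt ENNReal.ofReal_lt_top) s hs t ht hst
  rw [one_mul] at h
  exact h.trans (pVarNorm_le_of_pVar_le hp hr ((pVar_mono hs.1 ht.2).trans hg))

lemma pVar_le_of_tendsto {ι : Type*} {L : Filter ι} [L.NeBot] {Y : ι → ℝ → ℝ} {B : ENNReal}
    (hp : 0 ≤ p) (hY : ∀ t ∈ Icc a b, Tendsto (fun i => Y i t) L (nhds (g t)))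
    (hB : ∀ i, pVar (Y i) p a b ≤ B) : pVar g p a b ≤ B := by
  refine pVar_le_iff.2 fun n t ht htI => ?_
  refine le_of_tendsto (f := fun i => pVarSum (Y i) p t) (x := L) ?_
    (.of_forall fun i => (pVarSum_le_pVar ht htI).trans (hB i))
  refine tendsto_finsetSum _ fun i _ => ENNReal.tendsto_ofReal ?_
  exact ((hY _ (htI _)).sub (hY _ (htI _))).abs.rpow_const (.inr hp)

end PVar

/-! ### Riemann–Stieltjes sums -/

/-- The Riemann–Stieltjes sum of `f` against `x` over the partition `t` with tags `ξ`. -/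
def rsSum (f x : ℝ → ℝ) {n : ℕ} (t : Fin (n + 1) → ℝ) (ξ : Fin n → ℝ) : ℝ :=
  ∑ i : Fin n, f (ξ i) * (x (t i.succ) - x (t i.castSucc))

/-- `t` is a partition of `[a, b]` into cells shorter than `δ`, tagged by `ξ`. -/
structure IsTaggedPartition (a b δ : ℝ) {n : ℕ} (t : Fin (n + 1) → ℝ) (ξ : Fin n → ℝ) : Prop where
  strictMono : StrictMono t
  zero : t 0 = a
  last : t (Fin.last n) = b
  tag_mem : ∀ i : Fin n, ξ i ∈ Icc (t i.castSucc) (t i.succ)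
  mesh_lt : ∀ i : Fin n, t i.succ - t i.castSucc < δ

lemma rsIntegral_iff {f g : ℝ → ℝ} {a b I : ℝ} : RSIntegral f g a b I ↔
    ∀ ε > 0, ∃ δ > 0, ∀ (n : ℕ) (t : Fin (n + 1) → ℝ) (ξ : Fin n → ℝ),
      IsTaggedPartition a b δ t ξ → |rsSum f g t ξ - I| < ε :=
  ⟨fun h ε hε => let ⟨δ, hδ, hI⟩ := h ε hε
    ⟨δ, hδ, fun n t ξ ht => hI n t ξ ht.strictMono ht.zero ht.last ht.tag_mem ht.mesh_lt⟩,
   fun h ε hε => let ⟨δ, hδ, hI⟩ := h ε hε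
    ⟨δ, hδ, fun n t ξ h₁ h₂ h₃ h₄ h₅ => hI n t ξ ⟨h₁, h₂, h₃, h₄, h₅⟩⟩⟩

lemma sum_succ_sub_castSucc {G : Type*} [AddCommGroup G] {n : ℕ} (f : Fin (n + 1) → G) :
    ∑ i : Fin n, (f i.succ - f i.castSucc) = f (Fin.last n) - f 0 := by
  rw [Finset.sum_sub_distrib, sub_eq_sub_iff_add_eq_add, add_comm, ← Fin.sum_univ_succ,
    Fin.sum_univ_castSucc, add_comm]

section RiemannStieltjes

variable {f x y : ℝ → ℝ} {ω₁ ω₂ : ℝ → ℝ → ℝ} {a b δ T M N β γ p : ℝ} {n : ℕ}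
  {t : Fin (n + 1) → ℝ} {ξ : Fin n → ℝ}

lemma IsTaggedPartition.mem_Icc (h : IsTaggedPartition a b δ t ξ) (i : Fin (n + 1)) :
    t i ∈ Icc a b :=
  ⟨h.zero ▸ h.strictMono.monotone (Fin.zero_le i), h.last ▸ h.strictMono.monotone (Fin.le_last i)⟩

theorem IsTaggedPartition.abs_rsSum_sub_le (h : IsTaggedPartition a b δ t ξ)
    (hy : ∀ u ∈ Icc a b, ∀ v ∈ Icc a b, u ≤ v → IsStepIntegral y f x u v)
    (hf : ControlledOn f ω₁ M β (Icc a b))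
    (hx : ∀ u ∈ Icc a b, ∀ v ∈ Icc a b, u ≤ v → v - u < δ → |x v - x u| ≤ N * ω₂ u v ^ γ)
    (hω₁ : IsControlOn ω₁ (Icc a b)) (hω₂ : IsControlOn ω₂ (Icc a b)) (hM : 0 ≤ M) (hN : 0 ≤ N)
    (hβ : 0 < β) (hγ : 0 < γ) (hβγ : 1 < β + γ) :
    |rsSum f x t ξ - (y b - y a)| ≤
      (sewingConst (β + γ) + 1) * (M * N) * (ω₁ a b ^ β * ω₂ a b ^ γ) := by
  obtain ⟨ω, hω, hω_rpow⟩ := hω₁.exists_rpow_eq_rpow_mul_rpow hω₂ hβ hγ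
  have ht := h.mem_Icc
  have hcell (i : Fin n) : t i.castSucc ≤ t i.succ := h.strictMono.monotone (Fin.castSucc_le_succ i)
  have hC := sewingConst_pos hβγ
  have hcell_le (i : Fin n) :
      |f (ξ i) * (x (t i.succ) - x (t i.castSucc)) - (y (t i.succ) - y (t i.castSucc))| ≤
        (sewingConst (β + γ) + 1) * (M * N) * ω (t i.castSucc) (t i.succ) ^ (β + γ) := by
    have hI : Icc (t i.castSucc) (t i.succ) ⊆ Icc a b := Icc_subset_Icc (ht _).1 (ht _).2
    rw [abs_sub_comm, hω_rpow _ (ht _) _ (ht _) (hcell i)]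
    refine (hy _ (ht _) _ (ht _) (hcell i)).abs_sub_sub_le (hf.subset hI)
      (fun u hu v hv huv => hx u (hI hu) v (hI hv) huv ?_) (hω₁.subset hI) (hω₂.subset hI)
      hM hN hβ hγ hβγ (h.tag_mem i)
    linarith [h.mesh_lt i, hu.1, hv.2]
  have hab : a ≤ b := (ht 0).1.trans (ht 0).2
  rw [← hω_rpow a (left_mem_Icc.2 hab) b (right_mem_Icc.2 hab) hab, ← h.last, ← h.zero,
    ← sum_succ_sub_castSucc fun i => y (t i), rsSum, ← Finset.sum_sub_distrib]
  calc _ ≤ ∑ i : Fin n,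
          (sewingConst (β + γ) + 1) * (M * N) * ω (t i.castSucc) (t i.succ) ^ (β + γ) :=
        (Finset.abs_sum_le_sum_abs _ _).trans (Finset.sum_le_sum fun i _ => hcell_le i)
    _ ≤ _ := by
      rw [← Finset.mul_sum]
      gcongr
      exact (hω.rpow hβγ.le).sum_le h.strictMono.monotone ht

lemma exists_mesh_forall_abs_sub_le_mul_pVarControl (hp : 0 < p) (hx : ContinuousOn x (Icc a b))
    (hxp : pVar x p a b < ⊤) (hγ : 0 < γ) (hγp : γ < 1 / p) (hN : 0 < N) :
    ∃ δ > 0, ∀ u ∈ Icc a b, ∀ v ∈ Icc a b, u ≤ v → v - u < δ →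
      |x v - x u| ≤ N * pVarControl x p u v ^ γ := by
  have hγp' : 0 < 1 - γ * p := sub_pos.2 ((lt_div_iff₀ hp).1 hγp)
  obtain ⟨δ, hδ, hunif⟩ := Metric.uniformContinuousOn_iff.1
    (isCompact_Icc.uniformContinuousOn_of_continuous hx) (N ^ (1 - γ * p)⁻¹)
    (Real.rpow_pos_of_pos hN _)
  refine ⟨δ, hδ, fun u hu v hv huv huvδ => ?_⟩
  have hsmall : |x v - x u| ^ (1 - γ * p) ≤ N := by
    refine (Real.le_rpow_inv_iff_of_pos (abs_nonneg _) hN.le hγp').1 (hunif v hv u hu ?_).le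
    rwa [Real.dist_eq, abs_of_nonneg (sub_nonneg.2 huv)]
  have hvar : |x v - x u| ^ (γ * p) ≤ pVarControl x p u v ^ γ := by
    have h := controlledOn_pVarControl hp hxp u hu v hv huv
    rw [one_mul, one_div, Real.le_rpow_inv_iff_of_pos (abs_nonneg _) pVarControl_nonneg hp] at h
    rw [mul_comm, Real.rpow_mul (abs_nonneg _)]
    gcongr
  calc |x v - x u| = |x v - x u| ^ (1 - γ * p) * |x v - x u| ^ (γ * p) := by
        rw [← Real.rpow_add_of_nonneg (abs_nonneg _) hγp'.le (by positivity), sub_add_cancel,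
          Real.rpow_one]
    _ ≤ N * pVarControl x p u v ^ γ := by gcongr

-- Lowering the exponent of `x` below `1 / p` turns the smallness of the mesh into a small constant.
theorem exists_mesh_forall_abs_rsSum_sub_le (hp : 0 < p) (hx : ContinuousOn x (Icc a b))
    (hxp : pVar x p a b < ⊤) (hβ : 0 < β) (hβp : 1 < β + 1 / p) (hM : 0 ≤ M) {A ε : ℝ}
    (hA : 0 ≤ A) (hε : 0 < ε) :
    ∃ δ > 0, ∀ (f y : ℝ → ℝ) (ω : ℝ → ℝ → ℝ), ∀ T ∈ Icc a b, IsControlOn ω (Icc a T) →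
      ω a T ≤ A → ControlledOn f ω M β (Icc a T) →
      (∀ u ∈ Icc a T, ∀ v ∈ Icc a T, u ≤ v → IsStepIntegral y f x u v) →
      ∀ (n : ℕ) (t : Fin (n + 1) → ℝ) (ξ : Fin n → ℝ), IsTaggedPartition a T δ t ξ →
        |rsSum f x t ξ - (y T - y a)| ≤ ε := by
  obtain ⟨γ, hγ, hγp⟩ : ∃ γ, max 0 (1 - β) < γ ∧ γ < 1 / p :=
    exists_between (max_lt (by positivity) (by linarith))
  obtain ⟨hγ, hβγ⟩ := max_lt_iff.1 hγ
  have hβγ : 1 < β + γ := by linarith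
  have hC := sewingConst_pos hβγ
  have hX : 0 ≤ pVarControl x p a b := pVarControl_nonneg
  set Q := (sewingConst (β + γ) + 1) * M * (A ^ β * pVarControl x p a b ^ γ) with hQ
  have : 0 ≤ Q := by positivity
  obtain ⟨δ, hδ, hxδ⟩ := exists_mesh_forall_abs_sub_le_mul_pVarControl hp hx hxp hγ hγp
    (N := ε / (Q + 1)) (by positivity)
  refine ⟨δ, hδ, fun f y ω T hT hω hωA hf hy n t ξ ht => ?_⟩
  have hI : Icc a T ⊆ Icc a b := Icc_subset_Icc le_rfl hT.2
  have hω_nonneg : 0 ≤ ω a T := hω.nonneg (left_mem_Icc.2 hT.1) (right_mem_Icc.2 hT.1) hT.1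
  have hXT : pVarControl x p a T ≤ pVarControl x p a b :=
    ENNReal.toReal_mono hxp.ne (pVar_mono le_rfl hT.2)
  have hXT_nonneg : 0 ≤ pVarControl x p a T := pVarControl_nonneg
  calc |rsSum f x t ξ - (y T - y a)|
      ≤ (sewingConst (β + γ) + 1) * (M * (ε / (Q + 1))) *
          (ω a T ^ β * pVarControl x p a T ^ γ) :=
        ht.abs_rsSum_sub_le hy hf (fun u hu v hv => hxδ u (hI hu) v (hI hv)) hω
          ((isControlOn_pVarControl hp hxp).subset hI) hM (by positivity) hβ hγ hβγ
    _ ≤ (sewingConst (β + γ) + 1) * (M * (ε / (Q + 1))) * (A ^ β * pVarControl x p a b ^ γ) := by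
        gcongr
    _ = ε * (Q / (Q + 1)) := by rw [hQ]; ring
    _ ≤ ε := mul_le_of_le_one_right hε.le ((div_le_one (by positivity)).2 (by linarith))

end RiemannStieltjes

theorem RSIntegral.of_tendsto {ι : Type*} {L : Filter ι} [L.NeBot] {f : ι → ℝ → ℝ} {I : ι → ℝ}
    {f₀ x : ℝ → ℝ} {a b I₀ : ℝ}
    (hf : ∀ s ∈ Icc a b, Tendsto (fun i => f i s) L (nhds (f₀ s))) (hI : Tendsto I L (nhds I₀))
    (hunif : ∀ ε > 0, ∃ δ > 0, ∀ i (n : ℕ) (t : Fin (n + 1) → ℝ) (ξ : Fin n → ℝ),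
      IsTaggedPartition a b δ t ξ → |rsSum (f i) x t ξ - I i| ≤ ε) :
    RSIntegral f₀ x a b I₀ := by
  refine rsIntegral_iff.2 fun ε hε => ?_
  obtain ⟨δ, hδ, hsum⟩ := hunif (ε / 2) (by positivity)
  refine ⟨δ, hδ, fun n t ξ ht => ?_⟩
  have hlim : Tendsto (fun i => |rsSum (f i) x t ξ - I i|) L (nhds |rsSum f₀ x t ξ - I₀|) := by
    refine ((tendsto_finsetSum _ fun k _ => ?_).sub hI).abs
    have hξ : ξ k ∈ Icc a b :=
      Icc_subset_Icc (ht.mem_Icc _).1 (ht.mem_Icc _).2 (ht.tag_mem k)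
    exact (hf (ξ k) hξ).mul_const _
  exact (le_of_tendsto hlim (.of_forall fun i => hsum i n t ξ ht)).trans_lt (half_lt_self hε)

/-! ### The Euler scheme -/

/-- The index `k` of the grid cell `(a + k * h, a + (k + 1) * h]` containing `t`. The truncated
subtraction makes it `0` for `t ≤ a`. -/
noncomputable def eulerIndex (a h t : ℝ) : ℕ := ⌈(t - a) / h⌉₊ - 1

/-- The largest point of the grid `a + ℕ * h` strictly before `t`, or `a` when `t ≤ a`. -/
noncomputable def gridFloor (a h t : ℝ) : ℝ := a + eulerIndex a h t * h

/-- The values at the grid points of the Euler scheme with step `h` for `dy = F(y) dx`,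
`y(a) = y₀`. -/
def eulerNode (x F : ℝ → ℝ) (y₀ a h : ℝ) : ℕ → ℝ
  | 0 => y₀
  | k + 1 => eulerNode x F y₀ a h k +
      F (eulerNode x F y₀ a h k) * (x (a + (k + 1 : ℕ) * h) - x (a + k * h))

/-- The Euler path for `dy = F(y) dx`, `y(a) = y₀`: between grid points it follows `x`, with the
value of `F` at the left end of the cell. -/
noncomputable def eulerPath (x F : ℝ → ℝ) (y₀ a h t : ℝ) : ℝ :=
  eulerNode x F y₀ a h (eulerIndex a h t) +
    F (eulerNode x F y₀ a h (eulerIndex a h t)) * (x t - x (gridFloor a h t))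

section Grid

variable {a h s t : ℝ}

lemma eulerIndex_eq (hh : 0 < h) {k : ℕ} (ht : t ∈ Ioc (a + k * h) (a + (k + 1 : ℕ) * h)) :
    eulerIndex a h t = k := by
  have hceil : ⌈(t - a) / h⌉₊ = k + 1 := by
    rw [Nat.ceil_eq_iff k.succ_ne_zero, lt_div_iff₀ hh, div_le_iff₀ hh]
    exact ⟨lt_sub_iff_add_lt'.2 ht.1, sub_le_iff_le_add'.2 ht.2⟩
  rw [eulerIndex, hceil, Nat.add_sub_cancel]

lemma eulerIndex_le (hh : 0 < h) {m : ℕ} (ht : t ≤ a + (m + 1 : ℕ) * h) : eulerIndex a h t ≤ m :=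
  Nat.sub_le_of_le_add (Nat.ceil_le.2 ((div_le_iff₀ hh).2 (sub_le_iff_le_add'.2 ht)))

lemma gridFloor_monotone (hh : 0 < h) : Monotone (gridFloor a h) := fun s t hst => by
  have : eulerIndex a h s ≤ eulerIndex a h t := Nat.sub_le_sub_right (Nat.ceil_mono (by gcongr)) 1
  unfold gridFloor
  gcongr

lemma le_gridFloor (hh : 0 < h) : a ≤ gridFloor a h t :=
  le_add_of_nonneg_right (by positivity)

lemma gridFloor_le_add_mul (hh : 0 < h) {m : ℕ} (ht : t ≤ a + (m + 1 : ℕ) * h) :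
    gridFloor a h t ≤ a + m * h := by
  have := eulerIndex_le hh ht
  unfold gridFloor
  gcongr

lemma gridFloor_le (hh : 0 < h) (ht : a ≤ t) : gridFloor a h t ≤ t := by
  have hindex : (eulerIndex a h t : ℝ) ≤ (t - a) / h := by
    have hpos : 0 ≤ (t - a) / h := div_nonneg (sub_nonneg.2 ht) hh.le
    exact (Nat.cast_le.2 (Nat.sub_le_of_le_add (Nat.ceil_le_floor_add_one _))).trans
      (Nat.floor_le hpos)
  exact le_sub_iff_add_le'.1 ((le_div_iff₀ hh).1 hindex)

lemma sub_le_gridFloor (hh : 0 < h) : t - h ≤ gridFloor a h t := by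
  have hindex : (t - a) / h ≤ eulerIndex a h t + 1 :=
    (Nat.le_ceil _).trans (by exact_mod_cast le_tsub_add)
  rw [div_le_iff₀ hh] at hindex
  unfold gridFloor
  linarith

lemma tendsto_gridFloor {ι : Type*} {L : Filter ι} {h : ι → ℝ} (hh : ∀ i, 0 < h i)
    (hh₀ : Tendsto h L (nhds 0)) (ht : a ≤ t) :
    Tendsto (fun i => gridFloor a (h i) t) L (nhds t) :=
  tendsto_of_tendsto_of_tendsto_of_le_of_le (by simpa using tendsto_const_nhds.sub hh₀)
    tendsto_const_nhds (fun i => sub_le_gridFloor (hh i)) fun i => gridFloor_le (hh i) ht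

end Grid

section EulerPath

variable {x F : ℝ → ℝ} {y₀ a h s t : ℝ}

lemma eulerPath_add_mul (hh : 0 < h) (k : ℕ) :
    eulerPath x F y₀ a h (a + k * h) = eulerNode x F y₀ a h k := by
  cases k with
  | zero => simp [eulerPath, gridFloor, eulerIndex, eulerNode]
  | succ k =>
    rw [eulerPath, gridFloor, eulerIndex_eq hh ⟨by gcongr; simp, le_rfl⟩, eulerNode]

lemma eulerPath_left (hh : 0 < h) : eulerPath x F y₀ a h a = y₀ := by
  simpa [eulerNode] using eulerPath_add_mul (x := x) (F := F) (y₀ := y₀) (a := a) hh 0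

lemma eulerPath_gridFloor (hh : 0 < h) :
    eulerPath x F y₀ a h (gridFloor a h t) = eulerNode x F y₀ a h (eulerIndex a h t) :=
  eulerPath_add_mul hh _

lemma eulerPath_sub_gridFloor (hh : 0 < h) :
    eulerPath x F y₀ a h t - eulerPath x F y₀ a h (gridFloor a h t) =
      F (eulerPath x F y₀ a h (gridFloor a h t)) * (x t - x (gridFloor a h t)) := by
  rw [eulerPath_gridFloor hh, eulerPath, add_sub_cancel_left]

lemma eulerPath_eq_of_mem_Icc (hh : 0 < h) {k : ℕ}
    (ht : t ∈ Icc (a + k * h) (a + (k + 1 : ℕ) * h)) :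
    eulerPath x F y₀ a h t = eulerNode x F y₀ a h k +
      F (eulerNode x F y₀ a h k) * (x t - x (a + k * h)) := by
  rcases ht.1.eq_or_lt with rfl | hlt
  · rw [eulerPath_add_mul hh, sub_self, mul_zero, add_zero]
  · rw [eulerPath, gridFloor, eulerIndex_eq hh ⟨hlt, ht.2⟩]

theorem isStepIntegral_eulerPath (hh : 0 < h) (has : a ≤ s) (hst : s ≤ t) :
    IsStepIntegral (eulerPath x F y₀ a h)
      (fun u => F (eulerPath x F y₀ a h (gridFloor a h u))) x s t := by
  obtain ⟨N, hN⟩ := exists_nat_ge ((t - a) / h)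
  have hN : t ≤ a + N * h := sub_le_iff_le_add'.1 ((div_le_iff₀ hh).1 hN)
  have hτ : Monotone fun k : ℕ => max s (min t (a + k * h)) := fun i j hij => by
    dsimp only
    gcongr
  refine ⟨fun k => max s (min t (a + k * h)), N, hτ, by simp [has], by simp [hN, hst],
    fun k => ⟨le_max_left _ _, max_le hst (min_le_left _ _)⟩, fun k => ?_⟩
  rcases (hτ k.le_succ).eq_or_lt with heq | hlt
  · simp only [Nat.succ_eq_add_one] at heq
    simp only [heq, sub_self, mul_zero]
  have hs : s < min t (a + (k + 1 : ℕ) * h) :=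
    (lt_max_iff.1 ((le_max_left _ _).trans_lt hlt)).resolve_left (lt_irrefl s)
  have hk : a + k * h < t := by
    by_contra! htk
    refine hlt.not_ge (max_le (le_max_left _ _) (le_max_of_le_right ?_))
    exact (min_le_left _ _).trans (le_min le_rfl htk)
  have hright : max s (min t (a + (k + 1 : ℕ) * h)) ≤ a + (k + 1 : ℕ) * h :=
    max_le (hs.le.trans (min_le_right _ _)) (min_le_right _ _)
  have hleft : a + k * h ≤ max s (min t (a + k * h)) := le_max_of_le_right (le_min hk.le le_rfl)
  have hindex := eulerIndex_eq hh ⟨hleft.trans_lt hlt, hright⟩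
  dsimp only
  rw [eulerPath_gridFloor hh, hindex, eulerPath_eq_of_mem_Icc hh ⟨hleft, hlt.le.trans hright⟩,
    eulerPath_eq_of_mem_Icc hh ⟨hleft.trans hlt.le, hright⟩]
  ring

end EulerPath

/-! ### Uniform variation bound and passage to the limit -/

section Hoelder

variable {F g : ℝ → ℝ} {ω : ℝ → ℝ → ℝ} {K α β : ℝ} {S : Set ℝ}

lemma nonneg_of_abs_sub_le_mul_rpow (hF : ∀ u v, |F u - F v| ≤ K * |u - v| ^ α) : 0 ≤ K := by
  simpa using (abs_nonneg _).trans (hF 1 0)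

lemma continuous_of_abs_sub_le_mul_rpow (hα : 0 < α)
    (hF : ∀ u v, |F u - F v| ≤ K * |u - v| ^ α) : Continuous F := by
  refine continuous_iff_continuousAt.2 fun v => tendsto_iff_dist_tendsto_zero.2 ?_
  refine squeeze_zero (fun _ => dist_nonneg) (fun u => hF u v) ?_
  have hcont : Continuous fun u => K * |u - v| ^ α := by fun_prop (disch := exact hα.le)
  simpa [Real.zero_rpow hα.ne'] using hcont.tendsto v

lemma abs_le_add_mul_rpow (hα : 0 ≤ α) (hF : ∀ u v, |F u - F v| ≤ K * |u - v| ^ α) {R v : ℝ}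
    (hv : |v| ≤ R) : |F v| ≤ |F 0| + K * R ^ α := by
  have hK := nonneg_of_abs_sub_le_mul_rpow hF
  calc |F v| ≤ |F 0| + |F v - F 0| := by linarith [abs_sub_abs_le_abs_sub (F v) (F 0)]
    _ ≤ |F 0| + K * |v| ^ α := by simpa using hF v 0
    _ ≤ |F 0| + K * R ^ α := by gcongr

lemma ControlledOn.hoelder_comp (hα : 0 ≤ α) (hF : ∀ u v, |F u - F v| ≤ K * |u - v| ^ α)
    (hω : IsControlOn ω S) (hg : ControlledOn g ω 1 β S) :
    ControlledOn (fun t => F (g t)) ω K (β * α) S := by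
  intro u hu v hv huv
  have hK := nonneg_of_abs_sub_le_mul_rpow hF
  refine (hF _ _).trans ?_
  rw [Real.rpow_mul (hω.nonneg hu hv huv)]
  gcongr
  simpa using hg u hu v hv huv

lemma ControlledOn.comp_monotoneOn {M : ℝ} {T : Set ℝ} {τ : ℝ → ℝ} (hg : ControlledOn g ω M β S)
    (hτ : MonotoneOn τ T) (hTS : MapsTo τ T S) :
    ControlledOn (fun t => g (τ t)) (fun u v => ω (τ u) (τ v)) M β T :=
  fun _ hu _ hv huv => hg _ (hTS hu) _ (hTS hv) (hτ hu hv huv)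

end Hoelder

section Bound

variable {x F : ℝ → ℝ} {y₀ a b c h p α K R r s t T : ℝ}

lemma isControlOn_pVarControl_gridFloor {g : ℝ → ℝ} (hp : 0 < p) (hh : 0 < h)
    (hT : MapsTo (gridFloor a h) (Icc a T) (Icc a c)) (hg : pVar g p a c < ⊤) :
    IsControlOn (fun u v => pVarControl g p (gridFloor a h u) (gridFloor a h v)) (Icc a T) :=
  (isControlOn_pVarControl hp hg).comp ((gridFloor_monotone hh).monotoneOn _) hT

lemma controlledOn_comp_gridFloor {g : ℝ → ℝ} (hp : 0 < p) (hα : 0 ≤ α)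
    (hF : ∀ u v, |F u - F v| ≤ K * |u - v| ^ α) (hh : 0 < h)
    (hT : MapsTo (gridFloor a h) (Icc a T) (Icc a c)) (hg : pVar g p a c < ⊤) :
    ControlledOn (fun t => F (g (gridFloor a h t)))
      (fun u v => pVarControl g p (gridFloor a h u) (gridFloor a h v)) K (α / p) (Icc a T) := by
  rw [div_eq_inv_mul, ← one_div]
  exact ((controlledOn_pVarControl hp hg).hoelder_comp hα hF
    (isControlOn_pVarControl hp hg)).comp_monotoneOn ((gridFloor_monotone hh).monotoneOn _) hT

lemma abs_le_add_of_pVar_le {g : ℝ → ℝ} (hp : 0 < p) (hr : 0 ≤ r)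
    (hg : pVar g p a b ≤ ENNReal.ofReal (r ^ p)) (ht : t ∈ Icc a b) : |g t| ≤ |g a| + r := by
  have := abs_sub_le_of_pVar_le hp hr (left_mem_Icc.2 (ht.1.trans ht.2)) ht ht.1 hg
  linarith [abs_sub_abs_le_abs_sub (g t) (g a)]

/-- The constant of the theorem. The exponents are those of `F ∘ y` and of `x` in terms of the
controls given by the `p`-variations of `y` and `x`. -/
noncomputable def solutionConst (p α : ℝ) : ℝ := sewingConst (α / p + 1 / p) + 1

lemma one_lt_div_add_one_div (hp : 0 < p) (hpα : p - 1 < α) : 1 < α / p + 1 / p := by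
  rw [← add_div, one_lt_div hp]
  linarith

lemma solutionConst_pos (hp : 0 < p) (hpα : p - 1 < α) : 0 < solutionConst p α :=
  add_pos (sewingConst_pos (one_lt_div_add_one_div hp hpα)) one_pos

lemma abs_eulerPath_sub_sub_le (hp : 0 < p) (hα : 0 < α) (hpα : p - 1 < α)
    (hF : ∀ u v, |F u - F v| ≤ K * |u - v| ^ α) (hh : 0 < h)
    (hT : MapsTo (gridFloor a h) (Icc a T) (Icc a c)) (hx : pVar x p a T < ⊤) (hr : 0 ≤ r)
    (hc : pVar (eulerPath x F y₀ a h) p a c ≤ ENNReal.ofReal (r ^ p)) (hs : s ∈ Icc a T)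
    (ht : t ∈ Icc a T) (hst : s ≤ t) :
    |eulerPath x F y₀ a h t - eulerPath x F y₀ a h s -
        F (eulerPath x F y₀ a h (gridFloor a h t)) * (x t - x s)| ≤
      sewingConst (α / p + 1 / p) * K * (r ^ α * pVarNorm x p s t) := by
  have hθ := one_lt_div_add_one_div hp hpα
  have hC := sewingConst_pos hθ
  have hK := nonneg_of_abs_sub_le_mul_rpow hF
  have hc_top := hc.trans_lt ENNReal.ofReal_lt_top
  have hX : 0 ≤ pVarNorm x p s t := Real.rpow_nonneg ENNReal.toReal_nonneg _
  have hI : Icc s t ⊆ Icc a T := Icc_subset_Icc hs.1 ht.2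
  have hyoung := (isStepIntegral_eulerPath (x := x) (F := F) (y₀ := y₀) hh hs.1
    hst).abs_sub_sub_right_le
    ((controlledOn_comp_gridFloor hp hα.le hF hh hT hc_top).subset hI)
    ((controlledOn_pVarControl hp hx).subset hI)
    ((isControlOn_pVarControl_gridFloor hp hh hT hc_top).subset hI)
    ((isControlOn_pVarControl hp hx).subset hI) hK zero_le_one (by positivity) (by positivity) hθ
  rw [mul_one] at hyoung
  refine hyoung.trans (mul_le_mul_of_nonneg_left (mul_le_mul_of_nonneg_right ?_ hX) (by positivity))
  calc _ ≤ (r ^ p) ^ (α / p) := Real.rpow_le_rpow pVarControl_nonneg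
        (pVarControl_le_of_pVar_le hr (hT hs).1 (hT ht).2 hc) (by positivity)
    _ = r ^ α := by rw [← Real.rpow_mul hr, mul_div_cancel₀ _ hp.ne']

lemma abs_eulerPath_sub_le (hp : 0 < p) (hα : 0 < α) (hpα : p - 1 < α)
    (hF : ∀ u v, |F u - F v| ≤ K * |u - v| ^ α) (hh : 0 < h)
    (hT : MapsTo (gridFloor a h) (Icc a T) (Icc a c)) (hx : pVar x p a T < ⊤) (hr : 0 ≤ r)
    (hc : pVar (eulerPath x F y₀ a h) p a c ≤ ENNReal.ofReal (r ^ p)) (hs : s ∈ Icc a T)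
    (ht : t ∈ Icc a T) (hst : s ≤ t) :
    |eulerPath x F y₀ a h t - eulerPath x F y₀ a h s| ≤
      (solutionConst p α * K * (|y₀| + r) ^ α + |F 0|) * pVarNorm x p s t := by
  set y := eulerPath x F y₀ a h with hy
  have hC := sewingConst_pos (one_lt_div_add_one_div hp hpα)
  have hK := nonneg_of_abs_sub_le_mul_rpow hF
  have hX : 0 ≤ pVarNorm x p s t := Real.rpow_nonneg ENNReal.toReal_nonneg _
  have hyoung := abs_eulerPath_sub_sub_le hp hα hpα hF hh hT hx hr hc hs ht hst
  rw [← hy] at hyoung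
  have hFy : |F (y (gridFloor a h t))| ≤ |F 0| + K * (|y₀| + r) ^ α := by
    refine abs_le_add_mul_rpow hα.le hF ?_
    simpa [hy, eulerPath_left hh] using abs_le_add_of_pVar_le hp hr hc (hT ht)
  have hxst : |x t - x s| ≤ pVarNorm x p s t := by
    simpa [pVarNorm, pVarControl] using controlledOn_pVarControl hp hx s hs t ht hst
  have hry : r ≤ |y₀| + r := le_add_of_nonneg_left (abs_nonneg y₀)
  calc |y t - y s| ≤ |y t - y s - F (y (gridFloor a h t)) * (x t - x s)|
        + |F (y (gridFloor a h t))| * |x t - x s| := by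
        rw [← abs_mul]
        linarith [abs_sub_abs_le_abs_sub (y t - y s) (F (y (gridFloor a h t)) * (x t - x s))]
    _ ≤ sewingConst (α / p + 1 / p) * K * (r ^ α * pVarNorm x p s t)
        + (|F 0| + K * (|y₀| + r) ^ α) * pVarNorm x p s t := by gcongr
    _ ≤ sewingConst (α / p + 1 / p) * K * ((|y₀| + r) ^ α * pVarNorm x p s t)
        + (|F 0| + K * (|y₀| + r) ^ α) * pVarNorm x p s t := by gcongr
    _ = (solutionConst p α * K * (|y₀| + r) ^ α + |F 0|) * pVarNorm x p s t := by
        rw [solutionConst]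
        ring

-- Induction over the grid: the increments of the path over the first `m + 1` cells only involve
-- its values on the first `m` cells.
theorem pVar_eulerPath_le (hp : 0 < p) (hα : 0 < α) (hpα : p - 1 < α)
    (hF : ∀ u v, |F u - F v| ≤ K * |u - v| ^ α) (hh : 0 < h) (hab : a ≤ b)
    (hx : pVar x p a b < ⊤) (hr : 0 ≤ r)
    (hxr : (solutionConst p α * K * (|y₀| + r) ^ α + |F 0|) * pVarNorm x p a b ≤ r) :
    pVar (eulerPath x F y₀ a h) p a b ≤ ENNReal.ofReal (r ^ p) := by
  have hC := solutionConst_pos hp hpα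
  have hK := nonneg_of_abs_sub_le_mul_rpow hF
  suffices hgrid : ∀ (m : ℕ), ∀ T ∈ Icc a b, T ≤ a + m * h →
      pVar (eulerPath x F y₀ a h) p a T ≤ ENNReal.ofReal (r ^ p) by
    obtain ⟨m, hm⟩ := exists_nat_ge ((b - a) / h)
    exact hgrid m b (right_mem_Icc.2 hab) (sub_le_iff_le_add'.1 ((div_le_iff₀ hh).1 hm))
  intro m
  induction m with
  | zero =>
    intro T hT hTm
    obtain rfl : T = a := le_antisymm (by simpa using hTm) hT.1
    simp [pVar_self hp.ne']
  | succ m ih =>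
    intro T hT hTm
    have hc : min T (a + m * h) ∈ Icc a b :=
      ⟨le_min hT.1 (le_add_of_nonneg_right (by positivity)), (min_le_left _ _).trans hT.2⟩
    have hmaps : MapsTo (gridFloor a h) (Icc a T) (Icc a (min T (a + m * h))) := fun s hs =>
      ⟨le_gridFloor hh, le_min ((gridFloor_le hh hs.1).trans hs.2)
        (gridFloor_le_add_mul hh (hs.2.trans hTm))⟩
    have hxT := (pVar_mono le_rfl hT.2).trans_lt hx
    refine (pVar_le_ofReal_rpow_of_le_mul_pVarNorm hp hT.1 hxT (by positivity)
      fun s hs t ht hst => abs_eulerPath_sub_le hp hα hpα hF hh hmaps hxT hr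
        (ih _ hc (min_le_right _ _)) hs ht hst).trans ?_
    have hX : pVarNorm x p a T ≤ pVarNorm x p a b := pVarNorm_mono hp hx le_rfl hT.2
    have hX₀ : 0 ≤ pVarNorm x p a T := Real.rpow_nonneg ENNReal.toReal_nonneg _
    gcongr
    exact (mul_le_mul_of_nonneg_left hX (by positivity)).trans hxr

lemma tendsto_eulerPath_gridFloor (hp : 0 < p) (hα : 0 ≤ α)
    (hF : ∀ u v, |F u - F v| ≤ K * |u - v| ^ α) (hx : ContinuousOn x (Icc a b)) (hr : 0 ≤ r)
    {ι : Type*} {L : Filter ι} {h : ι → ℝ} (hh : ∀ i, 0 < h i) (hh₀ : Tendsto h L (nhds 0))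
    (hbound : ∀ i, pVar (eulerPath x F y₀ a (h i)) p a b ≤ ENNReal.ofReal (r ^ p))
    (ht : t ∈ Icc a b) {l : ℝ} (hl : Tendsto (fun i => eulerPath x F y₀ a (h i) t) L (nhds l)) :
    Tendsto (fun i => eulerPath x F y₀ a (h i) (gridFloor a (h i) t)) L (nhds l) := by
  have hmem (i : ι) : gridFloor a (h i) t ∈ Icc a b :=
    ⟨le_gridFloor (hh i), (gridFloor_le (hh i) ht.1).trans ht.2⟩
  have hxlim : Tendsto (fun i => x t - x (gridFloor a (h i) t)) L (nhds 0) := by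
    simpa using (tendsto_const_nhds (x := x t)).sub ((hx t ht).tendsto.comp
      (tendsto_nhdsWithin_iff.2 ⟨tendsto_gridFloor hh hh₀ ht.1, .of_forall hmem⟩))
  have hFbound (i : ι) : |F (eulerPath x F y₀ a (h i) (gridFloor a (h i) t))| ≤
      |F 0| + K * (|y₀| + r) ^ α := by
    refine abs_le_add_mul_rpow hα hF ?_
    simpa [eulerPath_left (hh i)] using abs_le_add_of_pVar_le hp hr (hbound i) (hmem i)
  have hdiff : Tendsto (fun i => eulerPath x F y₀ a (h i) t -
      eulerPath x F y₀ a (h i) (gridFloor a (h i) t)) L (nhds 0) := by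
    simp_rw [eulerPath_sub_gridFloor (hh _)]
    exact bdd_le_mul_tendsto_zero' _ (.of_forall hFbound) hxlim
  simpa using hl.sub hdiff

theorem rsIntegral_of_tendsto_eulerPath (hp : 0 < p) (hα : 0 < α) (hpα : p - 1 < α)
    (hF : ∀ u v, |F u - F v| ≤ K * |u - v| ^ α) (hx : ContinuousOn x (Icc a b))
    (hxp : pVar x p a b < ⊤) (hr : 0 ≤ r) {ι : Type*} {L : Filter ι} [L.NeBot] {h : ι → ℝ}
    (hh : ∀ i, 0 < h i) (hh₀ : Tendsto h L (nhds 0))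
    (hbound : ∀ i, pVar (eulerPath x F y₀ a (h i)) p a b ≤ ENNReal.ofReal (r ^ p)) {y : ℝ → ℝ}
    (hy : ∀ t ∈ Icc a b, Tendsto (fun i => eulerPath x F y₀ a (h i) t) L (nhds (y t)))
    (ht : t ∈ Icc a b) : RSIntegral (fun s => F (y s)) x a t (y t - y₀) := by
  have hK := nonneg_of_abs_sub_le_mul_rpow hF
  have hmaps (i : ι) {T : ℝ} : MapsTo (gridFloor a (h i)) (Icc a T) (Icc a T) := fun s hs =>
    ⟨le_gridFloor (hh i), (gridFloor_le (hh i) hs.1).trans hs.2⟩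
  refine RSIntegral.of_tendsto
    (f := fun i s => F (eulerPath x F y₀ a (h i) (gridFloor a (h i) s)))
    (I := fun i => eulerPath x F y₀ a (h i) t - y₀) (fun s hs => ?_)
    ((hy t ht).sub_const y₀) fun ε hε => ?_
  · exact ((continuous_of_abs_sub_le_mul_rpow hα hF).tendsto _).comp
      (tendsto_eulerPath_gridFloor hp hα.le hF hx hr hh hh₀ hbound ⟨hs.1, hs.2.trans ht.2⟩
        (hy s ⟨hs.1, hs.2.trans ht.2⟩))
  · obtain ⟨δ, hδ, hsum⟩ := exists_mesh_forall_abs_rsSum_sub_le hp hx hxp (div_pos hα hp)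
      (one_lt_div_add_one_div hp hpα) hK (Real.rpow_nonneg hr p) hε
    refine ⟨δ, hδ, fun i n τ ξ hτ => ?_⟩
    have hvar : pVar (eulerPath x F y₀ a (h i)) p a t < ⊤ :=
      ((pVar_mono le_rfl ht.2).trans (hbound i)).trans_lt ENNReal.ofReal_lt_top
    simpa only [eulerPath_left (hh i)] using hsum _ _ _ t ht
      (isControlOn_pVarControl_gridFloor hp (hh i) (hmaps i) hvar)
      (pVarControl_le_of_pVar_le hr (le_gridFloor (hh i))
        ((gridFloor_le (hh i) ht.1).trans ht.2) (hbound i))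
      (controlledOn_comp_gridFloor hp hα.le hF (hh i) (hmaps i) hvar)
      (fun u hu v _ huv => isStepIntegral_eulerPath (hh i) hu.1 huv) n τ ξ hτ

lemma exists_forall_tendsto_of_forall_abs_le {ι κ : Type*} (L : Ultrafilter ι) {Y : ι → κ → ℝ}
    {S : Set κ} {R : ℝ} (hY : ∀ i, ∀ t ∈ S, |Y i t| ≤ R) :
    ∃ y : κ → ℝ, ∀ t ∈ S, Tendsto (fun i => Y i t) L (nhds (y t)) := by
  have hlim : ∀ t ∈ S, ∃ l, Tendsto (fun i => Y i t) L (nhds l) := fun t ht => by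
    have hmem : ∀ᶠ i in L, Y i t ∈ Icc (-R) R := .of_forall fun i => abs_le.1 (hY i t ht)
    obtain ⟨l, _, hl⟩ := isCompact_Icc.ultrafilter_le_nhds (L.map fun i => Y i t)
      (le_principal_iff.2 hmem)
    exact ⟨l, hl⟩
  choose! y hy using hlim
  exact ⟨y, hy⟩

theorem integral_equation_solution_bound_general (hp : 0 < p) (hα : 0 < α) (hpα : p - 1 < α)
    (hab : a ≤ b) (hx : ContinuousOn x (Icc a b)) (hxp : pVar x p a b < ⊤)
    (hF : ∀ u v, |F u - F v| ≤ K * |u - v| ^ α) (hR : 0 ≤ R)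
    (hR_le : solutionConst p α * K * pVarNorm x p a b * R ^ α + |y₀| +
      |F 0| * pVarNorm x p a b ≤ R) :
    ∃ y : ℝ → ℝ, pVar y p a b < ⊤ ∧
      (∀ t ∈ Icc a b, RSIntegral (fun s => F (y s)) x a t (y t - y₀)) ∧
      |y a| + pVarNorm y p a b ≤ R := by
  have hC := solutionConst_pos hp hpα
  have hK := nonneg_of_abs_sub_le_mul_rpow hF
  have hX : 0 ≤ pVarNorm x p a b := Real.rpow_nonneg ENNReal.toReal_nonneg _
  have hr : 0 ≤ R - |y₀| := by
    have : 0 ≤ solutionConst p α * K * pVarNorm x p a b * R ^ α + |F 0| * pVarNorm x p a b := by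
      positivity
    linarith
  let h : ℕ → ℝ := fun n => 1 / (n + 1)
  have hh (n : ℕ) : 0 < h n := Nat.one_div_pos_of_nat
  have hh₀ : Tendsto h (hyperfilter ℕ) (nhds 0) :=
    tendsto_one_div_add_atTop_nhds_zero_nat.mono_left Nat.hyperfilter_le_atTop
  have hbound (n : ℕ) : pVar (eulerPath x F y₀ a (h n)) p a b ≤ ENNReal.ofReal ((R - |y₀|) ^ p) :=
    pVar_eulerPath_le hp hα hpα hF (hh n) hab hxp hr (by rw [add_sub_cancel]; linarith)
  obtain ⟨y, hy⟩ := exists_forall_tendsto_of_forall_abs_le (hyperfilter ℕ)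
    (Y := fun n => eulerPath x F y₀ a (h n)) (S := Icc a b) fun n _ ht =>
      abs_le_add_of_pVar_le hp hr (hbound n) ht |>.trans_eq (by rw [eulerPath_left (hh n)])
  have hya : y a = y₀ := tendsto_nhds_unique (hy a (left_mem_Icc.2 hab))
    (by simpa only [eulerPath_left (hh _)] using tendsto_const_nhds)
  have hy_var : pVar y p a b ≤ ENNReal.ofReal ((R - |y₀|) ^ p) :=
    pVar_le_of_tendsto hp.le hy hbound
  refine ⟨y, hy_var.trans_lt ENNReal.ofReal_lt_top, fun t ht =>
    rsIntegral_of_tendsto_eulerPath hp hα hpα hF hx hxp hr hh hh₀ hbound hy ht, ?_⟩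
  rw [hya]
  linarith [pVarNorm_le_of_pVar_le hp hr hy_var]

end Bound

/-- Proposition 1 (with the quantitative bound): there is a constant `C = C(p,α)`
such that the integral equation admits a solution `y` of finite `p`-variation with
`|y(a)| + ‖y‖_{p-var} ≤ R`, where `R` is the least positive solution of
`R = C·K·‖x‖_{p-var}·R^α + |y₀| + |F(0)|·‖x‖_{p-var}`. -/
theorem integral_equation_solution_bound
    (p α : ℝ) (hp : 1 < p) (hp2 : p < 2) (hα1 : p - 1 < α) (hα2 : α < 1) :
    ∃ C : ℝ, 0 < C ∧ ∀ (a b : ℝ), a < b → ∀ y₀ : ℝ, ∀ x : ℝ → ℝ,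
      ContinuousOn x (Set.Icc a b) → pVar x p a b < ⊤ →
      ∀ (F : ℝ → ℝ) (K : ℝ), 0 ≤ K → (∀ u v : ℝ, |F u - F v| ≤ K * |u - v| ^ α) →
      ∀ R : ℝ, 0 < R →
        R = C * K * pVarNorm x p a b * R ^ α + |y₀| + |F 0| * pVarNorm x p a b →
        (∀ R' : ℝ, 0 < R' →
          R' = C * K * pVarNorm x p a b * R' ^ α + |y₀| + |F 0| * pVarNorm x p a b →
          R ≤ R') →
        ∃ y : ℝ → ℝ, pVar y p a b < ⊤ ∧
          (∀ t ∈ Set.Icc a b, RSIntegral (fun s => F (y s)) x a t (y t - y₀)) ∧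
          |y a| + pVarNorm y p a b ≤ R := by
  refine ⟨solutionConst p α, solutionConst_pos (by linarith) hα1,
    fun a b hab y₀ x hx hxp F K _ hF R hR hR_eq _ => ?_⟩
  exact integral_equation_solution_bound_general (by linarith) (by linarith) hα1 hab.le hx hxp hF
    hR.le hR_eq.ge
end

section
/- Let p ≥ 1 and let f : [a;b] → ℝ have finite p-variation. Then for every δ > 0, the truncated variation satisfies TV^δ(f,[a;b]) ≤ V^p(f,[a;b]) · δ^{1−p}. -/
open Filter Set

/-!
An increment of size `x ≤ δ` contributes nothing to the truncated variation, and one of size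
`x > δ` contributes at most `x = x ^ p * x ^ (1 - p) ≤ x ^ p * δ ^ (1 - p)`, the exponent `1 - p`
being nonpositive. Summing this pointwise bound along a partition gives the estimate.
-/

section Increment

variable {x δ p : ℝ}

theorem le_rpow_mul_rpow_one_sub (hδ : 0 < δ) (hδx : δ ≤ x) (hp : 1 ≤ p) :
    x ≤ x ^ p * δ ^ (1 - p) := by
  have hx : 0 < x := hδ.trans_le hδx
  calc x = x ^ p * x ^ (1 - p) := by rw [← Real.rpow_add hx, add_sub_cancel, Real.rpow_one]
    _ ≤ x ^ p * δ ^ (1 - p) := by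
      gcongr ?_ * ?_
      exact Real.rpow_le_rpow_of_nonpos hδ hδx (sub_nonpos.mpr hp)

theorem sub_le_rpow_mul_rpow_one_sub (hx : 0 ≤ x) (hδ : 0 < δ) (hp : 1 ≤ p) :
    x - δ ≤ x ^ p * δ ^ (1 - p) := by
  rcases le_total x δ with hxδ | hδx
  · exact (sub_nonpos.mpr hxδ).trans (by positivity)
  · exact (sub_le_self x hδ.le).trans (le_rpow_mul_rpow_one_sub hδ hδx hp)

end Increment

/-- The `φ`-variation of `f` on `s`: the supremum of `∑ φ (dist (f tᵢ₊₁) (f tᵢ))` over finite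
strictly increasing sequences in `s`. The gauge `φ` is arbitrary, so that both the `p`-variation
and the truncated variation are instances. -/
noncomputable def phiVar {α E : Type*} [Preorder α] [PseudoMetricSpace E]
    (φ : ℝ → ENNReal) (f : α → E) (s : Set α) : ENNReal :=
  ⨆ (n : ℕ) (t : Fin (n + 1) → α) (_ : StrictMono t) (_ : ∀ i, t i ∈ s),
    ∑ i : Fin n, φ (dist (f (t i.succ)) (f (t i.castSucc)))

theorem truncVar_eq_phiVar (f : ℝ → ℝ) (δ a b : ℝ) :
    truncVar f δ a b = phiVar (fun x ↦ ENNReal.ofReal (x - δ)) f (Icc a b) :=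
  rfl

theorem pVar_eq_phiVar (f : ℝ → ℝ) (p a b : ℝ) :
    pVar f p a b = phiVar (fun x ↦ ENNReal.ofReal (x ^ p)) f (Icc a b) :=
  rfl

section PhiVar

variable {α E : Type*} [Preorder α] [PseudoMetricSpace E]

theorem sum_le_phiVar (φ : ℝ → ENNReal) (f : α → E) {s : Set α} {n : ℕ} {t : Fin (n + 1) → α}
    (ht : StrictMono t) (hts : ∀ i, t i ∈ s) :
    ∑ i : Fin n, φ (dist (f (t i.succ)) (f (t i.castSucc))) ≤ phiVar φ f s :=
  le_iSup_of_le n <| le_iSup_of_le t <| le_iSup_of_le ht <| le_iSup_of_le hts le_rfl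

theorem phiVar_le_phiVar_mul {φ ψ : ℝ → ENNReal} {c : ENNReal}
    (h : ∀ x, 0 ≤ x → φ x ≤ ψ x * c) (f : α → E) (s : Set α) :
    phiVar φ f s ≤ phiVar ψ f s * c := by
  refine iSup_le fun n ↦ iSup_le fun t ↦ iSup_le fun ht ↦ iSup_le fun hts ↦ ?_
  calc ∑ i : Fin n, φ (dist (f (t i.succ)) (f (t i.castSucc)))
      ≤ ∑ i : Fin n, ψ (dist (f (t i.succ)) (f (t i.castSucc))) * c :=
        Finset.sum_le_sum fun _ _ ↦ h _ dist_nonneg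
    _ = (∑ i : Fin n, ψ (dist (f (t i.succ)) (f (t i.castSucc)))) * c :=
        (Finset.sum_mul ..).symm
    _ ≤ phiVar ψ f s * c := by
        gcongr
        exact sum_le_phiVar ψ f ht hts

theorem truncVar_le_pVar_mul_rpow_general (f : α → E) (s : Set α) {p δ : ℝ}
    (hp : 1 ≤ p) (hδ : 0 < δ) :
    phiVar (fun x ↦ ENNReal.ofReal (x - δ)) f s ≤
      phiVar (fun x ↦ ENNReal.ofReal (x ^ p)) f s * ENNReal.ofReal (δ ^ (1 - p)) := by
  refine phiVar_le_phiVar_mul (fun x hx ↦ ?_) f s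
  rw [← ENNReal.ofReal_mul (by positivity)]
  exact ENNReal.ofReal_le_ofReal (sub_le_rpow_mul_rpow_one_sub hx hδ hp)

end PhiVar

/-- Truncated variation bound via `p`-variation: `TV^δ(f,[a;b]) ≤ V^p(f,[a;b])·δ^{1−p}`. -/
theorem truncVar_le_pVar_mul_rpow
    (a b p : ℝ) (hp : 1 ≤ p) (f : ℝ → ℝ) (hf : pVar f p a b < ⊤)
    (δ : ℝ) (hδ : 0 < δ) :
    truncVar f δ a b ≤ pVar f p a b * ENNReal.ofReal (δ ^ (1 - p)) := by
  rw [truncVar_eq_phiVar, pVar_eq_phiVar]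
  exact truncVar_le_pVar_mul_rpow_general f (Icc a b) hp hδ
end

section
/- For any functions f, h : [a;b] → ℝ and any δ ≥ 0, the truncated variation satisfies TV^δ(f + h, [a;b]) ≤ TV^δ(f, [a;b]) + TV^0(h, [a;b]), where TV^0(h,[a;b]) is the total variation of h. -/
open Filter Set

theorem ofReal_norm_add_sub_add_le {E : Type*} [SeminormedAddGroup E] (x y : E) (δ η : ℝ) :
    ENNReal.ofReal (‖x + y‖ - (δ + η)) ≤ ENNReal.ofReal (‖x‖ - δ) + ENNReal.ofReal (‖y‖ - η) :=
  calc
    ENNReal.ofReal (‖x + y‖ - (δ + η)) ≤ ENNReal.ofReal ((‖x‖ - δ) + (‖y‖ - η)) :=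
      ENNReal.ofReal_le_ofReal (by linarith [norm_add_le x y])
    _ ≤ ENNReal.ofReal (‖x‖ - δ) + ENNReal.ofReal (‖y‖ - η) := ENNReal.ofReal_add_le

section

variable {f : ℝ → ℝ} {δ a b : ℝ}

theorem truncVar_le_iff {C : ENNReal} :
    truncVar f δ a b ≤ C ↔
      ∀ (n : ℕ) (t : Fin (n + 1) → ℝ), StrictMono t → (∀ i, t i ∈ Icc a b) →
        ∑ i : Fin n, ENNReal.ofReal (|f (t i.succ) - f (t i.castSucc)| - δ) ≤ C := by
  simp only [truncVar, iSup_le_iff]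

theorem sum_le_truncVar {n : ℕ} {t : Fin (n + 1) → ℝ} (ht : StrictMono t)
    (ht_mem : ∀ i, t i ∈ Icc a b) :
    ∑ i : Fin n, ENNReal.ofReal (|f (t i.succ) - f (t i.castSucc)| - δ) ≤ truncVar f δ a b :=
  truncVar_le_iff.1 le_rfl n t ht ht_mem

end

theorem truncVar_add_le_general (a b δ η : ℝ) (f h : ℝ → ℝ) :
    truncVar (fun t => f t + h t) (δ + η) a b ≤ truncVar f δ a b + truncVar h η a b := by
  refine truncVar_le_iff.2 fun n t ht ht_mem => ?_
  calc
    ∑ i : Fin n, ENNReal.ofReal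
          (|f (t i.succ) + h (t i.succ) - (f (t i.castSucc) + h (t i.castSucc))| - (δ + η))
        ≤ ∑ i : Fin n, (ENNReal.ofReal (|f (t i.succ) - f (t i.castSucc)| - δ) +
            ENNReal.ofReal (|h (t i.succ) - h (t i.castSucc)| - η)) := by
      refine Finset.sum_le_sum fun i _ => ?_
      simpa only [add_sub_add_comm, Real.norm_eq_abs] using
        ofReal_norm_add_sub_add_le
          (f (t i.succ) - f (t i.castSucc)) (h (t i.succ) - h (t i.castSucc)) δ η
    _ = ∑ i : Fin n, ENNReal.ofReal (|f (t i.succ) - f (t i.castSucc)| - δ) +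
          ∑ i : Fin n, ENNReal.ofReal (|h (t i.succ) - h (t i.castSucc)| - η) :=
      Finset.sum_add_distrib
    _ ≤ truncVar f δ a b + truncVar h η a b :=
      add_le_add (sum_le_truncVar ht ht_mem) (sum_le_truncVar ht ht_mem)

/-- Perturbation estimate: `TV^δ(f + h,[a;b]) ≤ TV^δ(f,[a;b]) + TV^0(h,[a;b])`. -/
theorem truncVar_add_le
    (a b δ : ℝ) (hδ : 0 ≤ δ) (f h : ℝ → ℝ) :
    truncVar (fun t => f t + h t) δ a b ≤ truncVar f δ a b + truncVar h 0 a b := by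
  simpa only [add_zero] using truncVar_add_le_general a b δ 0 f h
end

section
/- Let f, g : [a;b] → ℝ be regulated functions with no common points of discontinuity, and let η > 0 and θ > 0. Then there exists h > 0 such that for every subinterval [c;d] ⊆ [a;b] with d − c ≤ h, at least one of the following holds: sup_{c≤s≤d} |f(s) − f(c)| ≤ η, or sup_{c≤s≤d} |g(d) − g(s)| ≤ θ. -/
open Filter Set

open scoped Topology ENNReal

/-! The oscillation of `f` or of `g` is small near each point of the compact set `K`, and smallness
of a diameter passes to subsets; so, with `δ` a Lebesgue number of the resulting cover of `K`, the
alternative holds on every subset of diameter at most `δ`. -/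

theorem exists_pos_forall_diam_le_of_nhdsWithin {X : Type*} [PseudoMetricSpace X]
    {K : Set X} (hK : IsCompact K) {p : Set X → Prop} (hempty : p ∅)
    (hmono : ∀ ⦃S T : Set X⦄, S ⊆ T → p T → p S)
    (hlocal : ∀ x ∈ K, ∃ N ∈ 𝓝[K] x, p N) :
    ∃ δ : ℝ, 0 < δ ∧ ∀ S ⊆ K, Metric.diam S ≤ δ → p S := by
  choose N hN hpN using hlocal
  obtain ⟨δ, hδ, hball⟩ :=
    Metric.uniformity_basis_dist_le.lebesgue_number_lemma_nhdsWithin' hK hN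
  refine ⟨δ, hδ, fun S hSK hS => ?_⟩
  rcases S.eq_empty_or_nonempty with rfl | ⟨x, hx⟩
  · exact hempty
  · obtain ⟨y, hy⟩ := hball x (hSK hx)
    have hSN : S ⊆ N y y.2 := fun z hz =>
      hy ⟨(Metric.dist_le_diam_of_mem (hK.isBounded.subset hSK) hx hz).trans hS, hSK hz⟩
    exact hmono hSN (hpN y y.2)

theorem exists_mem_nhdsWithin_ediam_image_lt {X Y : Type*} [TopologicalSpace X]
    [PseudoEMetricSpace Y] {f : X → Y} {K : Set X} {x : X} {ε : ℝ≥0∞}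
    (h : oscillationWithin f K x < ε) : ∃ N ∈ 𝓝[K] x, Metric.ediam (f '' N) < ε := by
  simp only [oscillationWithin, iInf_lt_iff] at h
  obtain ⟨T, hT, hTε⟩ := h
  exact ⟨f ⁻¹' T, hT, (Metric.ediam_mono (image_preimage_subset f T)).trans_lt hTε⟩

theorem dist_le_of_ediam_image_le {X Y : Type*} [PseudoMetricSpace Y] {f : X → Y} {S : Set X}
    {ε : ℝ} (hε : 0 ≤ ε) (h : Metric.ediam (f '' S) ≤ ENNReal.ofReal ε) {s t : X} (hs : s ∈ S)
    (ht : t ∈ S) : dist (f s) (f t) ≤ ε :=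
  (edist_le_ofReal hε).1 <|
    (Metric.edist_le_ediam_of_mem (mem_image_of_mem f hs) (mem_image_of_mem f ht)).trans h

theorem small_oscillation_dichotomy_general {X Y Z : Type*} [PseudoMetricSpace X]
    [PseudoEMetricSpace Y] [PseudoEMetricSpace Z] {K : Set X} (hK : IsCompact K) {f : X → Y}
    {g : X → Z} {η θ : ℝ≥0∞}
    (hosc : ∀ x ∈ K, oscillationWithin f K x < η ∨ oscillationWithin g K x < θ) :
    ∃ h : ℝ, 0 < h ∧ ∀ S ⊆ K, Metric.diam S ≤ h →
      Metric.ediam (f '' S) ≤ η ∨ Metric.ediam (g '' S) ≤ θ := by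
  refine exists_pos_forall_diam_le_of_nhdsWithin hK
    (p := fun S => Metric.ediam (f '' S) ≤ η ∨ Metric.ediam (g '' S) ≤ θ) (by simp)
    (fun S T hST => Or.imp (Metric.ediam_mono (image_mono hST)).trans
      (Metric.ediam_mono (image_mono hST)).trans) fun x hx => ?_
  rcases hosc x hx with hf | hg
  · obtain ⟨N, hN, hNη⟩ := exists_mem_nhdsWithin_ediam_image_lt hf
    exact ⟨N, hN, Or.inl hNη.le⟩
  · obtain ⟨N, hN, hNθ⟩ := exists_mem_nhdsWithin_ediam_image_lt hg
    exact ⟨N, hN, Or.inr hNθ.le⟩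

/-- For regulated `f, g` with no common points of discontinuity, on every sufficiently
short subinterval `[c;d]` either `f` oscillates from `f(c)` by at most `η`, or `g`
oscillates from `g(d)` by at most `θ`. -/
theorem small_oscillation_dichotomy
    (a b : ℝ) (hab : a < b) (f g : ℝ → ℝ)
    (hf : Regulated f a b) (hg : Regulated g a b)
    (hfg : NoCommonDiscont f g a b)
    (η θ : ℝ) (hη : 0 < η) (hθ : 0 < θ) :
    ∃ h : ℝ, 0 < h ∧ ∀ c d : ℝ, a ≤ c → c ≤ d → d ≤ b → d - c ≤ h →
      (∀ s ∈ Set.Icc c d, |f s - f c| ≤ η) ∨ (∀ s ∈ Set.Icc c d, |g d - g s| ≤ θ) := by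
  obtain ⟨h, h_pos, hdich⟩ := small_oscillation_dichotomy_general isCompact_Icc fun x hx =>
    (hfg x hx).imp (fun hfx => hfx.oscillationWithin_eq_zero.trans_lt (ENNReal.ofReal_pos.2 hη))
      fun hgx => hgx.oscillationWithin_eq_zero.trans_lt (ENNReal.ofReal_pos.2 hθ)
  refine ⟨h, h_pos, fun c d hac hcd hdb hdc => ?_⟩
  exact (hdich (Icc c d) (Icc_subset_Icc hac hdb) ((Real.diam_Icc hcd).trans_le hdc)).imp
    (fun hf_osc _ hs => dist_le_of_ediam_image_le hη.le hf_osc hs (left_mem_Icc.2 hcd))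
    fun hg_osc _ hs => dist_le_of_ediam_image_le hθ.le hg_osc (right_mem_Icc.2 hcd) hs
end
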